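/- Fix ℏ > 0, N ≥ 2, complex numbers γ_{N1},…,γ_{NN}, and real numbers η = (η_{nj}), 1 ≤ j ≤ n ≤ N−1, with min_{1≤j≤n} η_{nj} > max_{1≤m≤n+1} η_{n+1,m} for every 1 ≤ n ≤ N−1, where η_{Nm} := Im γ_{Nm}. Define ψ : ℝ^N → ℂ by ψ(x_1,…,x_N) = ∫_{ℝ^{N(N−1)/2}} F(ξ; x) dξ, where F(ξ; x) = ∏_{n=1}^{N−1} [∏_{k=1}^{n}∏_{m=1}^{n+1} ℏ^{(γ_{nk} − γ_{n+1,m})/(iℏ)}·Γ((γ_{nk} − γ_{n+1,m})/(iℏ)) / ∏_{s≠p, s,p≤n} Γ((γ_{ns} − γ_{np})/(iℏ))]·exp((i/ℏ)·Σ_{n=1}^{N}(Σ_{j=1}^{n} γ_{nj} − Σ_{j=1}^{n−1} γ_{n−1,j})·x_n) with γ_{nj} = ξ_{nj} + iη_{nj} for n ≤ N−1. Then ψ is twice continuously differentiable on ℝ^N and satisfies the first two quantum open Toda chain equations: −iℏ·Σ_{n=1}^{N} ∂ψ/∂x_n = (Σ_{j=1}^{N} γ_{Nj})·ψ and −ℏ²·Σ_{1≤m<n≤N}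 ∂²ψ/∂x_m∂x_n − (Σ_{j=1}^{N−1} e^{x_j − x_{j+1}})·ψ = (Σ_{1≤j<k≤N} γ_{Nj}γ_{Nk})·ψ. -/

import Mathlib

open Finset MeasureTheory
noncomputable section
/-- A Gelfand–Zetlin array: complex values `γ n j`, relevant for `1 ≤ j ≤ n ≤ N`. -/
abbrev GZ := ℕ → ℕ → ℂ

/-- Index set of the Gelfand–Zetlin variables `(n, j)` with `1 ≤ j ≤ n ≤ N − 1`
(the pair `(p.1, p.2)` encodes `(n, j)`). -/
abbrev GZIdx (N : ℕ) := {p : Fin N × Fin N // 1 ≤ (p.2 : ℕ) ∧ (p.2 : ℕ) ≤ (p.1 : ℕ)}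

/-- The Gelfand–Zetlin array on the tube: lower levels `γ_{nj} = ξ_{nj} + iη_{nj}`,
top row `g`. -/
def gzTube (N : ℕ) (g : ℕ → ℂ) (η : ℕ → ℕ → ℝ) (ξ : GZIdx N → ℝ) : GZ := fun n j =>
  if h : 1 ≤ j ∧ j ≤ n ∧ n < N then
    ((ξ ⟨(⟨n, h.2.2⟩, ⟨j, lt_of_le_of_lt h.2.1 h.2.2⟩), h.1, h.2.1⟩ : ℝ) : ℂ) +
      Complex.I * (η n j : ℂ)
  else g j

/-- `ℏ^z := exp(z log ℏ)`. -/
def hpow (ℏ : ℝ) (z : ℂ) : ℂ := Complex.exp (z * (Real.log ℏ : ℂ))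

/-- The integrand of the Mellin–Barnes representation of the `GL(N,ℝ)` open Toda
chain wave function (`x n` is the Toda variable `x_n`, `1 ≤ n ≤ N`). -/
def todaIntegrand (ℏ : ℝ) (N : ℕ) (x : ℕ → ℝ) (γ : GZ) : ℂ :=
  (∏ n ∈ Icc 1 (N - 1),
    (∏ k ∈ Icc 1 n, ∏ m ∈ Icc 1 (n + 1),
      hpow ℏ ((γ n k - γ (n + 1) m) / (Complex.I * ℏ)) *
        Complex.Gamma ((γ n k - γ (n + 1) m) / (Complex.I * ℏ))) /
      ∏ s ∈ Icc 1 n, ∏ p ∈ (Icc 1 n).erase s,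
        Complex.Gamma ((γ n s - γ n p) / (Complex.I * ℏ))) *
    Complex.exp ((Complex.I / (ℏ : ℂ)) * ∑ n ∈ Icc 1 N,
      ((∑ j ∈ Icc 1 n, γ n j) - ∑ j ∈ Icc 1 (n - 1), γ (n - 1) j) * (x n : ℂ))

/-- The `1`-based coordinate `x_n` of `x : Fin N → ℝ` (so `xval x n = x_{n}` for
`1 ≤ n ≤ N`, with `0`-based entry `x (n−1)`). -/
def xval {N : ℕ} (x : Fin N → ℝ) (n : ℕ) : ℝ :=
  if h : n - 1 < N then x ⟨n - 1, h⟩ else 0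

lemma real_gamma_diff {x : ℝ} (hx : 0 < x) : DifferentiableAt ℝ Real.Gamma x :=
  Real.differentiableAt_Gamma (fun m h => by
    have : (0 : ℝ) ≤ m := by positivity
    linarith)

lemma gam_seq_mono {x x0 y : ℝ} (hx : 0 < x) (hxx : x ≤ x0) (n : ℕ) (hn : 0 < n) :
    ‖Complex.GammaSeq (x + y * Complex.I) n‖ * ‖Complex.GammaSeq x0 n‖ ≤
    ‖Complex.GammaSeq x n‖ * ‖Complex.GammaSeq (x0 + y * Complex.I) n‖ := by
  have key : ∀ (a : ℝ) (s : ℂ), s.re = a → ‖(n : ℂ) ^ s‖ = (n : ℝ) ^ a := by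
    intro a s hs
    rw [Complex.norm_natCast_cpow_of_pos hn, hs]
  simp only [Complex.GammaSeq, norm_div, norm_mul, norm_prod]
  rw [key x (x + y * Complex.I) (by simp), key x0 x0 (by simp), key x x (by simp),
    key x0 (x0 + y * Complex.I) (by simp)]
  set A := (n : ℝ) ^ x
  set B := (n : ℝ) ^ x0
  set Q := ‖((n.factorial : ℕ) : ℂ)‖
  have hA : 0 ≤ A := by positivity
  have hB : 0 ≤ B := by positivity
  have pos : ∀ (a b : ℝ), 0 < a → 0 < ∏ j ∈ range (n + 1), ‖(a : ℂ) + b * Complex.I + (j : ℂ)‖ := by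
    intro a b ha
    apply Finset.prod_pos
    intro j _
    rw [norm_pos_iff]
    intro h
    have := congrArg Complex.re h
    simp at this
    have hj : (0 : ℝ) ≤ j := by positivity
    linarith
  have hx0 : 0 < x0 := by linarith
  have p1 := pos x y hx
  have p2 := pos x0 y hx0
  have p3 := pos x 0 hx
  have p4 := pos x0 0 hx0
  simp only [Complex.ofReal_zero, zero_mul, add_zero] at p3 p4
  rw [div_mul_div_comm, div_mul_div_comm]
  have : (∏ j ∈ range (n + 1), ‖(x : ℂ) + (j : ℂ)‖) *
      (∏ j ∈ range (n + 1), ‖(x0 : ℂ) + y * Complex.I + (j : ℂ)‖) ≤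
      (∏ j ∈ range (n + 1), ‖(x : ℂ) + y * Complex.I + (j : ℂ)‖) *
      (∏ j ∈ range (n + 1), ‖(x0 : ℂ) + (j : ℂ)‖) := by
    rw [← Finset.prod_mul_distrib, ← Finset.prod_mul_distrib]
    apply Finset.prod_le_prod
    · intros; positivity
    · intro j _
      have hj : (0 : ℝ) ≤ j := by positivity
      rw [← norm_mul, ← norm_mul]
      rw [← sq_le_sq₀ (norm_nonneg _) (norm_nonneg _), Complex.sq_norm, Complex.sq_norm]
      simp only [Complex.normSq_mul, Complex.normSq_apply]
      simp
      have h1 : x + j ≤ x0 + j := by linarith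
      have h2 : (x + j) * (x + j) ≤ (x0 + j) * (x0 + j) := by
        apply mul_le_mul h1 h1 <;> linarith
      nlinarith [mul_le_mul_of_nonneg_left h2 (mul_self_nonneg y)]
  
  apply div_le_div_of_nonneg_left _ (mul_pos p3 p2) this
  positivity

lemma gam_mono {x x0 : ℝ} (y : ℝ) (hx : 0 < x) (hxx : x ≤ x0) :
    ‖Complex.Gamma (x + y * Complex.I)‖ * Real.Gamma x0 ≤
    Real.Gamma x * ‖Complex.Gamma (x0 + y * Complex.I)‖ := by
  have h0 : Real.Gamma x0 = ‖Complex.Gamma x0‖ := by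
    rw [Complex.Gamma_ofReal, Complex.norm_real, Real.norm_of_nonneg]
    exact (Real.Gamma_pos_of_pos (by linarith)).le
  have h1 : Real.Gamma x = ‖Complex.Gamma x‖ := by
    rw [Complex.Gamma_ofReal, Complex.norm_real, Real.norm_of_nonneg]
    exact (Real.Gamma_pos_of_pos (by linarith)).le
  rw [h0, h1]
  apply le_of_tendsto_of_tendsto
    ((Complex.GammaSeq_tendsto_Gamma _).norm.mul (Complex.GammaSeq_tendsto_Gamma _).norm)
    ((Complex.GammaSeq_tendsto_Gamma _).norm.mul (Complex.GammaSeq_tendsto_Gamma _).norm)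
  filter_upwards [Filter.eventually_gt_atTop 0] with n hn
  exact gam_seq_mono hx hxx n hn

lemma gam_half (y : ℝ) :
    ‖Complex.Gamma (1/2 + y * Complex.I)‖ ^ 2 = Real.pi / Real.cosh (Real.pi * y) := by
  have h := Complex.Gamma_mul_Gamma_one_sub (1/2 + y * Complex.I)
  have h2 : (1 : ℂ) - (1/2 + y * Complex.I) = (starRingEnd ℂ) (1/2 + y * Complex.I) := by
    apply Complex.ext
    · simp; norm_num
    · simp
  rw [h2, Complex.Gamma_conj, Complex.mul_conj] at h
  have h3 : Complex.sin (Real.pi * (1/2 + y * Complex.I)) = Real.cosh (Real.pi * y) := by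
    rw [show (Real.pi : ℂ) * (1/2 + y * Complex.I) = ((Real.pi * y : ℝ) : ℂ) * Complex.I + Real.pi / 2 by
      push_cast; ring, Complex.sin_add_pi_div_two, Complex.cos_mul_I]
    simp
  rw [h3] at h
  rw [Complex.sq_norm]
  exact_mod_cast h

lemma gam_half_upper (y : ℝ) :
    ‖Complex.Gamma (1/2 + y * Complex.I)‖ ≤ 3 * Real.exp (-(Real.pi / 2 * |y|)) := by
  rw [← sq_le_sq₀ (norm_nonneg _) (by positivity), gam_half, div_le_iff₀ (Real.cosh_pos _)]
  have h1 : Real.exp (Real.pi * |y|) ≤ 2 * Real.cosh (Real.pi * y) := by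
    rw [← Real.cosh_abs, Real.cosh_eq, abs_mul, abs_of_pos Real.pi_pos]
    have := Real.exp_pos (-(Real.pi * |y|))
    linarith
  have h2 : Real.exp (-(Real.pi / 2 * |y|)) ^ 2 * Real.exp (Real.pi * |y|) = 1 := by
    rw [← Real.exp_nat_mul, ← Real.exp_add, Real.exp_eq_one_iff]; push_cast; ring
  have := Real.pi_lt_four
  have h3 : 0 < Real.exp (-(Real.pi / 2 * |y|)) ^ 2 := by positivity
  nlinarith [mul_le_mul_of_nonneg_left h1 h3.le]

lemma gam_half_lower (y : ℝ) :
    Real.exp (-(Real.pi / 2 * |y|)) ≤ ‖Complex.Gamma (1/2 + y * Complex.I)‖ := by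
  rw [← sq_le_sq₀ (by positivity) (norm_nonneg _), gam_half, le_div_iff₀ (Real.cosh_pos _)]
  have h1 : Real.cosh (Real.pi * y) ≤ Real.exp (Real.pi * |y|) := by
    rw [← Real.cosh_abs, Real.cosh_eq, abs_mul, abs_of_pos Real.pi_pos]
    have : Real.exp (-(Real.pi * |y|)) ≤ Real.exp (Real.pi * |y|) := by
      apply Real.exp_le_exp.2
      have : 0 ≤ Real.pi * |y| := by positivity
      linarith
    linarith
  have h2 : Real.exp (-(Real.pi / 2 * |y|)) ^ 2 * Real.exp (Real.pi * |y|) = 1 := by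
    rw [← Real.exp_nat_mul, ← Real.exp_add, Real.exp_eq_one_iff]; push_cast; ring
  have := Real.pi_gt_three
  have h3 : 0 < Real.exp (-(Real.pi / 2 * |y|)) ^ 2 := by positivity
  nlinarith [mul_le_mul_of_nonneg_left h1 h3.le]

lemma gam_nat_half_upper (q : ℕ) (y : ℝ) :
    ‖Complex.Gamma ((q + 1/2 : ℝ) + y * Complex.I)‖ ≤
      3 * (q + 1) ^ q * (1 + |y|) ^ q * Real.exp (-(Real.pi / 2 * |y|)) := by
  have : ∀ q : ℕ, ∀ Q : ℝ, q ≤ Q → ‖Complex.Gamma ((q + 1/2 : ℝ) + y * Complex.I)‖ ≤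
      3 * (Q + 1) ^ q * (1 + |y|) ^ q * Real.exp (-(Real.pi / 2 * |y|)) := by
    intro q
    induction q with
    | zero => intro Q _; simpa using gam_half_upper y
    | succ q ih =>
      intro Q hQ
      push_cast at hQ
      have hw : ((q + 1/2 : ℝ) : ℂ) + y * Complex.I ≠ 0 := by
        intro h
        have := congrArg Complex.re h
        simp at this
        have hj : (0 : ℝ) ≤ q := by positivity
        linarith
      have e : ((((q + 1 : ℕ) : ℝ) + 1/2 : ℝ) : ℂ) + y * Complex.I =
        ((q + 1/2 : ℝ) : ℂ) + y * Complex.I + 1 := by push_cast; ring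
      rw [e, Complex.Gamma_add_one _ hw, norm_mul]
      have h1 : ‖((q + 1/2 : ℝ) : ℂ) + y * Complex.I‖ ≤ (Q + 1) * (1 + |y|) := by
        refine (norm_add_le _ _).trans ?_
        rw [norm_mul, Complex.norm_real, Complex.norm_real, Complex.norm_I, Real.norm_of_nonneg (by positivity), Real.norm_eq_abs]
        have := abs_nonneg y
        have hj : (0 : ℝ) ≤ q := by positivity
        nlinarith
      have h2 := ih Q (by linarith)
      calc _ ≤ ((Q + 1) * (1 + |y|)) * (3 * (Q + 1) ^ q * (1 + |y|) ^ q * Real.exp (-(Real.pi / 2 * |y|))) := by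
            gcongr
            have hj : (0 : ℝ) ≤ q := by positivity
            have : 0 ≤ Q + 1 := by linarith
            positivity
        _ = _ := by ring
  exact this q q le_rfl

lemma gam_upper (δ M : ℝ) (hδ : 0 < δ) : ∃ C : ℝ, 0 ≤ C ∧ ∃ p : ℕ, ∀ w : ℂ, δ ≤ w.re → w.re ≤ M →
    ‖Complex.Gamma w‖ ≤ C * (1 + |w.im|) ^ p * Real.exp (-(Real.pi / 2 * |w.im|)) := by
  obtain ⟨q, hq⟩ := exists_nat_ge M
  have hcont : ContinuousOn Real.Gamma (Set.Icc δ (M)) := by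
    intro x hx
    have : 0 < x := lt_of_lt_of_le hδ hx.1
    exact (real_gamma_diff this).continuousAt.continuousWithinAt
  obtain ⟨B, hB⟩ := isCompact_Icc.exists_bound_of_continuousOn hcont
  have hg : 0 < Real.Gamma (q + 1/2) := Real.Gamma_pos_of_pos (by positivity)
  refine ⟨|B| / Real.Gamma (q + 1/2) * (3 * (q + 1) ^ q), by positivity, q, ?_⟩
  intro w h1 h2
  have hx : 0 < w.re := by linarith
  have := gam_mono (x := w.re) (x0 := q + 1/2) w.im hx (by linarith)
  rw [Complex.re_add_im] at this
  have hb := hB w.re ⟨h1, h2⟩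
  have hb' : Real.Gamma w.re ≤ |B| := (le_abs_self _).trans (hb.trans (le_abs_self _))
  have h3 := gam_nat_half_upper q w.im
  rw [← le_div_iff₀ hg] at this
  refine this.trans ?_
  calc _ ≤ |B| * (3 * (q + 1) ^ q * (1 + |w.im|) ^ q * Real.exp (-(Real.pi / 2 * |w.im|))) / Real.Gamma (q + 1/2) := by
        gcongr
    _ = _ := by ring

lemma rgam_half (M : ℝ) : ∃ C : ℝ, 0 ≤ C ∧ ∀ w : ℂ, 1/2 ≤ w.re → w.re ≤ M →
    ‖(Complex.Gamma w)⁻¹‖ ≤ C * Real.exp (Real.pi / 2 * |w.im|) := by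
  have hcont : ContinuousOn (fun x => (Real.Gamma x)⁻¹) (Set.Icc (1/2) M) := by
    intro x hx
    have : 0 < x := lt_of_lt_of_le (by norm_num) hx.1
    exact ((real_gamma_diff this).continuousAt.inv₀
      (Real.Gamma_pos_of_pos this).ne').continuousWithinAt
  obtain ⟨B, hB⟩ := isCompact_Icc.exists_bound_of_continuousOn hcont
  refine ⟨Real.Gamma (1/2) * |B|, by have := Real.Gamma_pos_of_pos (s := 1/2) (by norm_num); positivity, ?_⟩
  intro w h1 h2
  have hw : 0 < w.re := by linarith
  have hg := Real.Gamma_pos_of_pos hw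
  have hg2 : 0 < Real.Gamma (1/2) := Real.Gamma_pos_of_pos (by norm_num)
  have hb := hB w.re ⟨h1, h2⟩
  have hb' : (Real.Gamma w.re)⁻¹ ≤ |B| := (le_abs_self _).trans (hb.trans (le_abs_self _))
  have := gam_mono (x := 1/2) (x0 := w.re) w.im (by norm_num) h1
  rw [Complex.re_add_im] at this
  have h3 := gam_half_lower w.im
  have e : (((1/2 : ℝ)) : ℂ) = 1/2 := by push_cast; ring
  rw [e] at this
  have h4 : Real.exp (-(Real.pi / 2 * |w.im|)) * Real.Gamma w.re ≤ Real.Gamma (1/2) * ‖Complex.Gamma w‖ :=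
    (mul_le_mul_of_nonneg_right h3 hg.le).trans this
  have hgw : 0 < ‖Complex.Gamma w‖ := norm_pos_iff.2 (Complex.Gamma_ne_zero_of_re_pos hw)
  rw [norm_inv, inv_le_iff_one_le_mul₀ hgw]
  have h5 : Real.exp (-(Real.pi / 2 * |w.im|)) * Real.exp (Real.pi / 2 * |w.im|) = 1 := by
    rw [← Real.exp_add]; simp
  have h6 : Real.exp (-(Real.pi / 2 * |w.im|)) ≤ Real.Gamma (1/2) * ‖Complex.Gamma w‖ * |B| := by
    rw [← le_div_iff₀ hg, div_eq_mul_inv] at h4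
    exact h4.trans (mul_le_mul_of_nonneg_left hb' (by positivity))
  calc 1 = Real.exp (-(Real.pi / 2 * |w.im|)) * Real.exp (Real.pi / 2 * |w.im|) := h5.symm
    _ ≤ (Real.Gamma (1/2) * ‖Complex.Gamma w‖ * |B|) * Real.exp (Real.pi / 2 * |w.im|) := by gcongr
    _ = _ := by ring

lemma rgam_upper (M : ℝ) : ∃ C : ℝ, 0 ≤ C ∧ ∃ p : ℕ, ∀ w : ℂ, |w.re| ≤ M →
    ‖(Complex.Gamma w)⁻¹‖ ≤ C * (1 + |w.im|) ^ p * Real.exp (Real.pi / 2 * |w.im|) := by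
  have main : ∀ q : ℕ, ∀ M : ℝ, ∃ C : ℝ, 0 ≤ C ∧ ∀ w : ℂ, 1/2 - q ≤ w.re → w.re ≤ M →
      ‖(Complex.Gamma w)⁻¹‖ ≤ C * (1 + |w.im|) ^ q * Real.exp (Real.pi / 2 * |w.im|) := by
    intro q
    induction q with
    | zero =>
      intro M
      obtain ⟨C, hC, h⟩ := rgam_half M
      exact ⟨C, hC, fun w h1 h2 => by simpa using h w (by simpa using h1) h2⟩
    | succ q ih =>
      intro M
      obtain ⟨C, hC, h⟩ := ih (M + 1)
      refine ⟨(|M| + q + 1) * C, by positivity, fun w h1 h2 => ?_⟩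
      rw [Complex.one_div_Gamma_eq_self_mul_one_div_Gamma_add_one, norm_mul]
      push_cast at h1
      have h3 := h (w + 1) (by simp; linarith) (by simp; linarith)
      have h4 : ‖w‖ ≤ (|M| + q + 1) * (1 + |w.im|) := by
        refine (Complex.norm_le_abs_re_add_abs_im w).trans ?_
        have : |w.re| ≤ |M| + q + 1 := by
          rw [abs_le]
          have := le_abs_self M
          have := abs_nonneg M
          have : (0 : ℝ) ≤ q := by positivity
          constructor <;> linarith
        have := abs_nonneg M
        have := abs_nonneg w.im
        have : (0 : ℝ) ≤ q := by positivity
        nlinarith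
      simp only [Complex.add_im, Complex.one_im, add_zero] at h3
      calc _ ≤ ((|M| + q + 1) * (1 + |w.im|)) * (C * (1 + |w.im|) ^ q * Real.exp (Real.pi / 2 * |w.im|)) := by
            gcongr
        _ = _ := by ring
  obtain ⟨q, hq⟩ := exists_nat_ge (M + 1/2)
  obtain ⟨C, hC, h⟩ := main q M
  refine ⟨C, hC, q, fun w hw => h w ?_ ?_⟩
  · have := neg_abs_le w.re
    linarith
  · exact (le_abs_self _).trans hw

lemma abs_chi (u v : ℝ) :
    Integrable (fun t : ℝ => ((if u ≤ t then (1:ℝ) else 0) - (if v ≤ t then (1:ℝ) else 0)) ^ 2) ∧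
    ∫ t : ℝ, ((if u ≤ t then (1:ℝ) else 0) - (if v ≤ t then (1:ℝ) else 0)) ^ 2 = |u - v| := by
  have e : (fun t : ℝ => ((if u ≤ t then (1:ℝ) else 0) - (if v ≤ t then (1:ℝ) else 0)) ^ 2) =
      Set.indicator (Set.Ico (min u v) (max u v)) (fun _ => (1:ℝ)) := by
    funext t
    simp only [Set.indicator_apply, Set.mem_Ico, min_le_iff, lt_max_iff]
    by_cases h1 : u ≤ t <;> by_cases h2 : v ≤ t <;> simp [h1, h2]
  rw [e]
  constructor
  · rw [integrable_indicator_iff measurableSet_Ico]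
    simp
  · rw [integral_indicator measurableSet_Ico]
    simp [max_sub_min_eq_abs]
    rw [abs_sub_comm]

def tD (S T : Finset ℕ) (a b : ℕ → ℝ) : ℝ :=
  ∑ k ∈ S, ∑ m ∈ T, |a k - b m| - (∑ k ∈ S, ∑ l ∈ S, |a k - a l|) / 2 -
    (∑ k ∈ T, ∑ l ∈ T, |b k - b l|) / 2

lemma sum_sq_chi (S T : Finset ℕ) (f g : ℕ → ℝ) (hf : ∀ k, f k ^ 2 = f k) (hg : ∀ k, g k ^ 2 = g k) :
    ∑ k ∈ S, ∑ m ∈ T, (f k - g m) ^ 2 =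
      T.card * (∑ k ∈ S, f k) + S.card * (∑ k ∈ T, g k) - 2 * (∑ k ∈ S, f k) * (∑ k ∈ T, g k) := by
  have : ∀ k m, (f k - g m) ^ 2 = f k + g m - 2 * (f k * g m) := by
    intro k m
    linear_combination hf k + hg m
  simp only [this, Finset.sum_sub_distrib, Finset.sum_add_distrib, Finset.sum_const, nsmul_eq_mul,
    ← Finset.mul_sum, ← Finset.sum_mul]
  ring

lemma tD_int (S T : Finset ℕ) (a b : ℕ → ℝ) (h : T.card = S.card + 1) :
    ∃ q : ℝ → ℝ, Integrable q ∧ ∫ t, q t = tD S T a b ∧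
      ∀ t, q t = (((T.filter (fun m => b m ≤ t)).card : ℝ) - (S.filter (fun k => a k ≤ t)).card) *
        (((T.filter (fun m => b m ≤ t)).card : ℝ) - (S.filter (fun k => a k ≤ t)).card - 1) := by
  have I : ∀ (S T : Finset ℕ) (a b : ℕ → ℝ), Integrable (fun t : ℝ => ∑ k ∈ S, ∑ m ∈ T,
      ((if a k ≤ t then (1:ℝ) else 0) - (if b m ≤ t then (1:ℝ) else 0)) ^ 2) := by
    intro S T a b
    exact integrable_finsetSum _ (fun k _ => integrable_finsetSum _ (fun m _ => (abs_chi _ _).1))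
  have J : ∀ (S T : Finset ℕ) (a b : ℕ → ℝ), ∫ t : ℝ, ∑ k ∈ S, ∑ m ∈ T,
      ((if a k ≤ t then (1:ℝ) else 0) - (if b m ≤ t then (1:ℝ) else 0)) ^ 2 =
      ∑ k ∈ S, ∑ m ∈ T, |a k - b m| := by
    intro S T a b
    rw [integral_finsetSum _ (fun k _ => integrable_finsetSum _ (fun m _ => (abs_chi _ _).1))]
    refine Finset.sum_congr rfl (fun k _ => ?_)
    rw [integral_finsetSum _ (fun m _ => (abs_chi _ _).1)]
    exact Finset.sum_congr rfl (fun m _ => (abs_chi _ _).2)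
  refine ⟨_, ((I S T a b).sub ((I S S a a).div_const 2)).sub ((I T T b b).div_const 2), ?_, ?_⟩
  · rw [integral_sub' (((I S T a b).sub ((I S S a a).div_const 2))) ((I T T b b).div_const 2)]
    rw [integral_sub' (I S T a b) ((I S S a a).div_const 2), integral_div, integral_div, J, J, J]
    rfl
  · intro t
    have hc : ∀ u : ℝ, (if u ≤ t then (1:ℝ) else 0) ^ 2 = if u ≤ t then (1:ℝ) else 0 := by
      intro u; split_ifs <;> simp
    simp only [Pi.sub_apply]
    rw [sum_sq_chi S T _ _ (fun k => hc (a k)) (fun k => hc (b k)),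
      sum_sq_chi S S _ _ (fun k => hc (a k)) (fun k => hc (a k)),
      sum_sq_chi T T _ _ (fun k => hc (b k)) (fun k => hc (b k)), h]
    simp only [Finset.sum_boole]
    push_cast
    ring

lemma int_quad (u v : ℕ) : (0:ℝ) ≤ ((u:ℝ) - v) * ((u:ℝ) - v - 1) := by
  have : (0:ℤ) ≤ ((u:ℤ) - v) * ((u:ℤ) - v - 1) := by
    rcases le_or_gt (u:ℤ) v with h | h
    · nlinarith
    · apply mul_nonneg <;> omega
  exact_mod_cast this

lemma tD_nonneg (S T : Finset ℕ) (a b : ℕ → ℝ) (h : T.card = S.card + 1) : 0 ≤ tD S T a b := by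
  obtain ⟨q, hq, hi, he⟩ := tD_int S T a b h
  rw [← hi]
  apply integral_nonneg
  intro t
  rw [Pi.zero_apply, he]
  exact int_quad _ _

lemma tD_lower (S T : Finset ℕ) (a b : ℕ → ℝ) (h : T.card = S.card + 1) (B : ℝ)
    (hb : ∀ m ∈ T, |b m| ≤ B) (j : ℕ) (hj : j ∈ S) : 2 * (|a j| - B) ≤ tD S T a b := by
  by_cases hneg : |a j| ≤ B
  · have := tD_nonneg S T a b h
    linarith
  push Not at hneg
  have hB : 0 ≤ B := by
    have : T.Nonempty := by rw [← Finset.card_pos]; omega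
    obtain ⟨m, hm⟩ := this
    exact (abs_nonneg _).trans (hb m hm)
  obtain ⟨q, hq, hi, he⟩ := tD_int S T a b h
  rw [← hi]
  have key : ∀ l r : ℝ, l ≤ r → (∀ t, l ≤ t → t < r → 2 ≤ q t) → 2 * (r - l) ≤ ∫ t, q t := by
    intro l r hlr hlb
    have : ∫ t, Set.indicator (Set.Ico l r) (fun _ => (2:ℝ)) t = 2 * (r - l) := by
      rw [integral_indicator measurableSet_Ico]
      simp [hlr]; ring
    rw [← this]
    apply integral_mono _ hq
    · intro t
      by_cases ht : t ∈ Set.Ico l r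
      · simp only [Set.indicator_of_mem ht]
        exact hlb t ht.1 ht.2
      · simp only [Set.indicator_of_notMem ht]
        rw [he]; exact int_quad _ _
    · rw [integrable_indicator_iff measurableSet_Ico]
      simp
  rcases le_or_gt 0 (a j) with h0 | h0
  · rw [abs_of_nonneg h0] at hneg ⊢
    apply key _ _ hneg.le
    intro t h1 h2
    rw [he]
    have hT : T.filter (fun m => b m ≤ t) = T := by
      apply Finset.filter_true_of_mem
      intro m hm
      exact (le_abs_self _).trans ((hb m hm).trans h1)
    have hS : (S.filter (fun k => a k ≤ t)).card + 1 ≤ S.card := by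
      apply Finset.card_lt_card
      rw [Finset.filter_ssubset]
      exact ⟨j, hj, by linarith⟩
    rw [hT, h]
    have hS' : ((S.filter (fun k => a k ≤ t)).card : ℝ) + 1 ≤ S.card := by exact_mod_cast hS
    push_cast
    nlinarith
  · rw [abs_of_neg h0] at hneg ⊢
    have := key (a j) (-B) (by linarith) ?_
    · linarith
    intro t h1 h2
    rw [he]
    have hT : T.filter (fun m => b m ≤ t) = ∅ := by
      apply Finset.filter_false_of_mem
      intro m hm
      have := hb m hm
      have := neg_abs_le (b m)
      linarith
    have hS : 1 ≤ (S.filter (fun k => a k ≤ t)).card := by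
      rw [Nat.one_le_iff_ne_zero, ← Nat.pos_iff_ne_zero, Finset.card_pos]
      exact ⟨j, by simp [hj, h1]⟩
    rw [hT]
    have hS' : (1:ℝ) ≤ ((S.filter (fun k => a k ≤ t)).card : ℝ) := by exact_mod_cast hS
    simp only [Finset.card_empty, Nat.cast_zero]
    nlinarith

def tE (N : ℕ) (r : ℕ → ℕ → ℝ) : ℝ :=
  ∑ n ∈ Icc 1 (N - 1), ((∑ s ∈ Icc 1 n, ∑ p ∈ (Icc 1 n).erase s, |r n s - r n p|) -
    ∑ k ∈ Icc 1 n, ∑ m ∈ Icc 1 (n + 1), |r n k - r (n + 1) m|)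

lemma tE_le (N : ℕ) (hN : 2 ≤ N) (r : ℕ → ℕ → ℝ) (B : ℝ) (hB : ∀ m ∈ Icc 1 N, |r N m| ≤ B)
    (n j : ℕ) (hn : n ≤ N - 1) (hj : j ∈ Icc 1 n) : tE N r ≤ 2 * B - 2 * |r n j| := by
  set D : ℕ → ℝ := fun n => tD (Icc 1 n) (Icc 1 (n + 1)) (r n) (r (n + 1)) with hD
  have hcard : ∀ n : ℕ, (Icc 1 (n + 1)).card = (Icc 1 n).card + 1 := by intro n; simp
  have hD0 : ∀ n, 0 ≤ D n := fun n => tD_nonneg _ _ _ _ (hcard n)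
  set W : ℕ → ℝ := fun n => ∑ k ∈ Icc 1 n, ∑ l ∈ Icc 1 n, |r n k - r n l| with hW
  have h1 : tE N r = -(∑ n ∈ Icc 1 (N - 1), D n) + (∑ n ∈ Icc 1 (N - 1), (W n - W (n + 1))) / 2 := by
    rw [Finset.sum_div, ← Finset.sum_neg_distrib, ← Finset.sum_add_distrib, tE]
    refine Finset.sum_congr rfl (fun n _ => ?_)
    have : ∑ s ∈ Icc 1 n, ∑ p ∈ (Icc 1 n).erase s, |r n s - r n p| = W n := by
      refine Finset.sum_congr rfl (fun s _ => ?_)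
      apply Finset.sum_erase
      simp
    rw [this]
    simp only [hD, hW, tD]
    ring
  have h2 : ∑ n ∈ Icc 1 (N - 1), (W n - W (n + 1)) = W 1 - W N := by
    have : ∀ M, ∑ n ∈ Icc 1 M, (W n - W (n + 1)) = W 1 - W (M + 1) := by
      intro M
      induction M with
      | zero => simp
      | succ M ih => rw [Finset.sum_Icc_succ_top (by omega), ih]; ring
    rw [this, Nat.sub_add_cancel (by omega)]
  have h3 : W 1 = 0 := by simp [hW]
  have h4 : 0 ≤ W N := Finset.sum_nonneg (fun _ _ => Finset.sum_nonneg (fun _ _ => abs_nonneg _))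
  have h5 : ∀ d n, n + d = N → ∀ j ∈ Icc 1 n, |r n j| ≤ B + (∑ m ∈ Ico n N, D m) / 2 := by
    intro d
    induction d with
    | zero =>
      intro n hn j hj
      simp only [add_zero] at hn
      subst hn
      simpa using hB j hj
    | succ d ih =>
      intro n hn j hj
      have h := tD_lower (Icc 1 n) (Icc 1 (n + 1)) (r n) (r (n + 1)) (hcard n) _
        (ih (n + 1) (by omega)) j hj
      rw [Finset.sum_eq_sum_Ico_succ_bot (by omega)]
      change _ ≤ D n at h
      linarith
  have h6 := h5 (N - n) n (by omega) j hj
  have h7 : ∑ m ∈ Ico n N, D m ≤ ∑ m ∈ Icc 1 (N - 1), D m := by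
    apply Finset.sum_le_sum_of_subset_of_nonneg
    · intro m
      simp only [Finset.mem_Ico, Finset.mem_Icc] at hj ⊢
      omega
    · intros; exact hD0 _
  rw [h1, h2, h3]
  linarith

lemma rapid_integrable {E : Type*} [NormedAddCommGroup E] [NormedSpace ℝ E] [FiniteDimensional ℝ E]
    [MeasurableSpace E] [BorelSpace E] (μ : Measure E) [μ.IsAddHaarMeasure] {f : E → ℂ}
    (hf : Continuous f) (k : ℕ) (hk : Module.finrank ℝ E < k) (C : ℝ)
    (hb : ∀ x, ‖f x‖ * (1 + ‖x‖) ^ k ≤ C) : Integrable f μ := by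
  have hk' : (Module.finrank ℝ E : ℝ) < (k : ℝ) := by exact_mod_cast hk
  have h1 := (integrable_one_add_norm (μ := μ) hk').const_mul C
  refine h1.mono' hf.aestronglyMeasurable (Filter.Eventually.of_forall fun x => ?_)
  have hp : 0 < 1 + ‖x‖ := by positivity
  rw [Real.rpow_neg hp.le, Real.rpow_natCast, ← div_eq_mul_inv, le_div_iff₀ (by positivity)]
  exact hb x

lemma strip_shift (g : ℂ → ℂ) (h : ℝ) (hh : 0 ≤ h)
    (hd : DifferentiableOn ℂ g {z : ℂ | 0 ≤ z.im ∧ z.im ≤ h}) (C : ℝ)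
    (hb : ∀ t s : ℝ, 0 ≤ s → s ≤ h → ‖g (t + s * Complex.I)‖ * (1 + |t|) ^ 2 ≤ C) :
    ∫ t : ℝ, g t = ∫ t : ℝ, g (t + h * Complex.I) := by
  have hcont : ∀ s : ℝ, 0 ≤ s → s ≤ h → Continuous (fun t : ℝ => g (t + s * Complex.I)) := by
    intro s h0 h1
    apply hd.continuousOn.comp_continuous (by fun_prop)
    intro t; simp [h0, h1]
  have hint : ∀ s : ℝ, 0 ≤ s → s ≤ h → Integrable (fun t : ℝ => g (t + s * Complex.I)) := by
    intro s h0 h1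
    exact rapid_integrable volume (hcont s h0 h1) 2 (by simp) C (fun t => hb t s h0 h1)
  have hC : 0 ≤ C := le_trans (by positivity) (hb 0 0 le_rfl hh)
  have l0 := intervalIntegral_tendsto_integral (hint 0 le_rfl hh) Filter.tendsto_neg_atTop_atBot Filter.tendsto_id
  have l1 := intervalIntegral_tendsto_integral (hint h hh le_rfl) Filter.tendsto_neg_atTop_atBot Filter.tendsto_id
  have side : ∀ σ : ℝ, |σ| = 1 → Filter.Tendsto (fun R : ℝ => ∫ y in (0:ℝ)..h, g ((σ * R : ℝ) + y * Complex.I))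
      Filter.atTop (nhds 0) := by
    intro σ hσ
    apply squeeze_zero_norm' (a := fun R : ℝ => C / (1 + R) * |h - 0|)
    · filter_upwards [Filter.eventually_ge_atTop 0] with R hR
      apply intervalIntegral.norm_integral_le_of_norm_le_const
      intro y hy
      rw [Set.uIoc_of_le hh] at hy
      have := hb (σ * R) y hy.1.le hy.2
      rw [abs_mul, hσ, one_mul, abs_of_nonneg hR] at this
      rw [le_div_iff₀ (by positivity)]
      refine le_trans ?_ this
      gcongr
      nlinarith
    · have : Filter.Tendsto (fun R : ℝ => C / (1 + R)) Filter.atTop (nhds 0) :=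
        Filter.Tendsto.const_div_atTop (Filter.tendsto_atTop_add_const_left _ _ Filter.tendsto_id) C
      simpa using this.mul_const (|h - 0|)
  have hz : ∀ R : ℝ, (∫ x in (-R)..R, g (x + (0:ℝ) * Complex.I)) - (∫ x in (-R)..R, g (x + h * Complex.I)) +
      Complex.I • (∫ y in (0:ℝ)..h, g ((1 * R : ℝ) + y * Complex.I)) -
      Complex.I • (∫ y in (0:ℝ)..h, g ((-1 * R : ℝ) + y * Complex.I)) = 0 := by
    intro R
    have := Complex.integral_boundary_rect_eq_zero_of_differentiableOn g (-R : ℂ) (R + h * Complex.I) (by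
      apply hd.mono
      intro z hz
      rw [Complex.mem_reProdIm] at hz
      simpa [Set.uIcc_of_le hh] using hz.2)
    simpa using this
  have lim := ((l0.sub l1).add ((side 1 (by simp)).const_smul Complex.I)).sub
    ((side (-1) (by simp)).const_smul Complex.I)
  have lim2 := tendsto_nhds_unique (lim.congr hz) tendsto_const_nhds
  simp only [smul_zero, add_zero, sub_zero, Complex.ofReal_zero, zero_mul] at lim2
  exact sub_eq_zero.1 lim2

lemma fubini_coord {ι : Type*} [Fintype ι] [DecidableEq ι] (i0 : ι) :
    ∃ ext : ({i // ¬ i = i0} → ℝ) → (ι → ℝ), (∀ y, ext y i0 = 0) ∧ ∀ f : (ι → ℝ) → ℂ, Integrable f →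
      ∫ ξ, f ξ = ∫ y, ∫ t : ℝ, f (Function.update (ext y) i0 t) := by
  let e := MeasurableEquiv.piEquivPiSubtypeProd (fun _ : ι => ℝ) (fun i => i = i0)
  have he : MeasurePreserving e volume volume := by
    convert volume_preserving_piEquivPiSubtypeProd (fun _ : ι => ℝ) (fun i => i = i0)
    all_goals rfl
  refine ⟨fun y => e.symm (fun _ => 0, y), ?_, ?_⟩
  · intro y
    simp [e, MeasurableEquiv.piEquivPiSubtypeProd, Equiv.piEquivPiSubtypeProd]
  · intro f hf
    have h1 : ∫ p, f (e.symm p) = ∫ ξ, f ξ := (he.symm e).integral_comp' f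
    have h2 : Integrable (fun p => f (e.symm p)) :=
      (MeasurePreserving.integrable_comp_emb (he.symm e) e.symm.measurableEmbedding).2 hf
    rw [← h1]
    rw [Measure.volume_eq_prod] at h2 ⊢
    rw [integral_prod_symm _ h2]
    congr 1
    funext y
    have h3 : MeasurePreserving (MeasurableEquiv.funUnique {i // i = i0} ℝ).symm volume volume := by
      convert (volume_preserving_funUnique {i // i = i0} ℝ).symm
    rw [← h3.integral_comp']
    congr 1
    funext t
    congr 1
    funext i
    by_cases hi : i = i0
    · subst hi
      simp [e, MeasurableEquiv.piEquivPiSubtypeProd, Equiv.piEquivPiSubtypeProd]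
    · simp [e, MeasurableEquiv.piEquivPiSubtypeProd, Equiv.piEquivPiSubtypeProd, hi]

lemma nd_shift {ι : Type*} [Fintype ι] [DecidableEq ι] (i0 : ι) (U : (ι → ℝ) → ℂ → ℂ) (h : ℝ)
    (hh : 0 ≤ h)
    (htr : ∀ ξ (t : ℝ) ζ, U (Function.update ξ i0 (ξ i0 + t)) ζ = U ξ (ζ + t))
    (hd : ∀ ξ, DifferentiableOn ℂ (U ξ) {z : ℂ | 0 ≤ z.im ∧ z.im ≤ h}) (k : ℕ) (C : ℝ)
    (hk : Fintype.card ι < k) (hk2 : 2 ≤ k)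
    (hb : ∀ ξ (s : ℝ), 0 ≤ s → s ≤ h → ‖U ξ (s * Complex.I)‖ * (1 + ‖ξ‖) ^ k ≤ C)
    (hc0 : Continuous (fun ξ => U ξ 0)) (hc1 : Continuous (fun ξ => U ξ (h * Complex.I))) :
    Integrable (fun ξ => U ξ 0) ∧ Integrable (fun ξ => U ξ (h * Complex.I)) ∧
    ∫ ξ, U ξ 0 = ∫ ξ, U ξ (h * Complex.I) := by
  obtain ⟨ext, hext, hf⟩ := fubini_coord i0
  have i0' : Integrable (fun ξ => U ξ 0) := rapid_integrable volume hc0 k (by simpa using hk) C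
    (fun ξ => by simpa using hb ξ 0 le_rfl hh)
  have i1' : Integrable (fun ξ => U ξ (h * Complex.I)) := rapid_integrable volume hc1 k (by simpa using hk) C
    (fun ξ => hb ξ h hh le_rfl)
  refine ⟨i0', i1', ?_⟩
  rw [hf _ i0', hf _ i1']
  congr 1
  funext y
  have hu : ∀ (t : ℝ) ζ, U (Function.update (ext y) i0 t) ζ = U (ext y) (t + ζ) := by
    intro t ζ
    have := htr (ext y) t ζ
    rw [hext, zero_add] at this
    rw [this, add_comm]
  simp only [hu, add_zero]
  apply strip_shift (U (ext y)) h hh (hd _) C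
  intro t s h0 h1
  rw [← hu]
  refine le_trans ?_ (hb (Function.update (ext y) i0 t) s h0 h1)
  have : |t| ≤ ‖Function.update (ext y) i0 t‖ := by
    have := norm_le_pi_norm (Function.update (ext y) i0 t) i0
    simpa using this
  gcongr
  calc (1 + |t|) ^ 2 ≤ (1 + |t|) ^ k := pow_le_pow_right₀ (by linarith [abs_nonneg t]) hk2
    _ ≤ _ := by gcongr

def Dec {ι : Type*} [Fintype ι] (c : (ι → ℝ) → ℂ) : Prop :=
  Continuous c ∧ ∀ k : ℕ, ∃ C : ℝ, ∀ ξ, ‖c ξ‖ * (1 + ‖ξ‖) ^ k ≤ C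

lemma Dec.integrable {ι : Type*} [Fintype ι] {c : (ι → ℝ) → ℂ} (hc : Dec c) : Integrable c := by
  obtain ⟨C, hC⟩ := hc.2 (Module.finrank ℝ (ι → ℝ) + 1)
  exact rapid_integrable volume hc.1 _ (Nat.lt_succ_self _) C hC

lemma Dec.mul {ι : Type*} [Fintype ι] {c d : (ι → ℝ) → ℂ} (hc : Dec c) (hd : Continuous d) (A : ℝ)
    (k : ℕ) (hA : ∀ ξ, ‖d ξ‖ ≤ A * (1 + ‖ξ‖) ^ k) : Dec (fun ξ => d ξ * c ξ) := by
  refine ⟨hd.mul hc.1, fun j => ?_⟩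
  obtain ⟨C, hC⟩ := hc.2 (j + k)
  refine ⟨|A| * C, fun ξ => ?_⟩
  rw [norm_mul]
  calc ‖d ξ‖ * ‖c ξ‖ * (1 + ‖ξ‖) ^ j ≤ (|A| * (1 + ‖ξ‖) ^ k) * ‖c ξ‖ * (1 + ‖ξ‖) ^ j := by
        gcongr
        exact (hA ξ).trans (by gcongr; exact le_abs_self A)
    _ = |A| * (‖c ξ‖ * (1 + ‖ξ‖) ^ (j + k)) := by ring
    _ ≤ _ := by gcongr; exact hC ξ

def PP {ι : Type*} [Fintype ι] {N : ℕ} (D : Fin N → (ι → ℝ) → ℂ) (c : (ι → ℝ) → ℂ) (x : Fin N → ℝ) : ℂ :=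
  ∫ ξ, c ξ * Complex.exp (∑ i, D i ξ * (x i : ℂ))

lemma norm_exp_le {ι : Type*} {N : ℕ} {D : Fin N → (ι → ℝ) → ℂ} {B : ℝ}
    (hB : ∀ i ξ, |(D i ξ).re| ≤ B) (ξ : ι → ℝ) (x : Fin N → ℝ) :
    ‖Complex.exp (∑ i, D i ξ * (x i : ℂ))‖ ≤ Real.exp (N * (|B| * ‖x‖)) := by
  rw [Complex.norm_exp]
  apply Real.exp_le_exp.2
  rw [Complex.re_sum]
  calc _ ≤ ∑ i : Fin N, |B| * ‖x‖ := by
        apply Finset.sum_le_sum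
        intro i _
        simp only [Complex.re_mul_ofReal]
        refine (le_abs_self _).trans ?_
        rw [abs_mul]
        exact mul_le_mul ((hB i ξ).trans (le_abs_self B)) (norm_le_pi_norm x i) (abs_nonneg _) (abs_nonneg _)
    _ = _ := by simp

lemma PP_hasFDerivAt {ι : Type*} [Fintype ι] {N : ℕ} {D : Fin N → (ι → ℝ) → ℂ}
    (hD : ∀ i, Continuous (D i)) {A B : ℝ} (hA : ∀ i ξ, ‖D i ξ‖ ≤ A * (1 + ‖ξ‖) ^ 1)
    (hB : ∀ i ξ, |(D i ξ).re| ≤ B) {c : (ι → ℝ) → ℂ} (hc : Dec c) (x : Fin N → ℝ) :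
    HasFDerivAt (PP D c) (∑ i, PP D (fun ξ => D i ξ * c ξ) x •
      (Complex.ofRealCLM.comp (ContinuousLinearMap.proj (R := ℝ) (φ := fun _ : Fin N => ℝ) i))) x := by
  have hint : ∀ (c : (ι → ℝ) → ℂ), Dec c → ∀ x : Fin N → ℝ,
      Integrable (fun ξ => c ξ * Complex.exp (∑ i, D i ξ * (x i : ℂ))) := by
    intro c hc x
    have : Dec (fun ξ => Complex.exp (∑ i, D i ξ * (x i : ℂ)) * c ξ) :=
      hc.mul (by fun_prop) (Real.exp (N * (|B| * ‖x‖))) 0 (fun ξ => by simpa using norm_exp_le hB ξ x)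
    simpa only [mul_comm] using this.integrable
  have hDc : ∀ i, Dec (fun ξ => D i ξ * c ξ) := fun i => hc.mul (hD i) A 1 (hA i)
  set L : Fin N → ((Fin N → ℝ) →L[ℝ] ℂ) := fun i =>
    (Complex.ofRealCLM.comp (ContinuousLinearMap.proj (R := ℝ) (φ := fun _ : Fin N => ℝ) i)) with hL
  have e : ∑ i, PP D (fun ξ => D i ξ * c ξ) x • L i =
      ∫ ξ, ∑ i, (D i ξ * c ξ * Complex.exp (∑ i, D i ξ * (x i : ℂ))) • L i := by
    rw [integral_finsetSum _ (fun i _ => (hint _ (hDc i) x).smul_const _)]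
    refine Finset.sum_congr rfl (fun i _ => ?_)
    rw [integral_smul_const]
    rfl
  rw [e]
  apply hasFDerivAt_integral_of_dominated_of_fderiv_le (s := Metric.ball x 1)
    (F' := fun x ξ => ∑ i, (D i ξ * c ξ * Complex.exp (∑ i, D i ξ * (x i : ℂ))) • L i)
    (bound := fun ξ => ∑ i, ‖D i ξ * c ξ‖ * Real.exp (N * (|B| * (‖x‖ + 1))) * ‖L i‖)
  · exact Metric.ball_mem_nhds x one_pos
  · exact Filter.Eventually.of_forall (fun y => (hint c hc y).aestronglyMeasurable)
  · exact hint c hc x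
  · apply Continuous.aestronglyMeasurable
    have := hc.1
    fun_prop
  · refine Filter.Eventually.of_forall (fun ξ y hy => ?_)
    refine (norm_sum_le _ _).trans (Finset.sum_le_sum (fun i _ => ?_))
    rw [norm_smul, norm_mul]
    gcongr
    refine (norm_exp_le hB ξ y).trans (Real.exp_le_exp.2 ?_)
    gcongr
    have : ‖y - x‖ < 1 := by simpa [dist_eq_norm] using hy
    have := norm_le_norm_add_norm_sub' y x
    linarith
  · apply integrable_finsetSum
    intro i _
    exact ((hDc i).integrable.norm.mul_const _).mul_const _
  · refine Filter.Eventually.of_forall (fun ξ y hy => ?_)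
    have h1 : HasFDerivAt (fun y : Fin N → ℝ => ∑ i, D i ξ * (y i : ℂ)) (∑ i, D i ξ • L i) y := by
      apply HasFDerivAt.fun_sum
      intro i _
      exact (L i).hasFDerivAt.const_mul (D i ξ)
    have h2 := (h1.cexp).const_mul (c ξ)
    refine h2.congr_fderiv ?_
    rw [Finset.smul_sum, Finset.smul_sum]
    refine Finset.sum_congr rfl (fun i _ => ?_)
    rw [smul_smul, smul_smul]
    congr 1
    ring

lemma PP_contDiff {ι : Type*} [Fintype ι] {N : ℕ} {D : Fin N → (ι → ℝ) → ℂ}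
    (hD : ∀ i, Continuous (D i)) {A B : ℝ} (hA : ∀ i ξ, ‖D i ξ‖ ≤ A * (1 + ‖ξ‖) ^ 1)
    (hB : ∀ i ξ, |(D i ξ).re| ≤ B) (n : ℕ) : ∀ {c : (ι → ℝ) → ℂ} (_ : Dec c),
    ContDiff ℝ n (PP D c) := by
  induction n with
  | zero =>
    intro c hc
    rw [Nat.cast_zero, contDiff_zero]
    exact continuous_iff_continuousAt.2 (fun x => (PP_hasFDerivAt hD hA hB hc x).continuousAt)
  | succ n ih =>
    intro c hc
    rw [Nat.cast_succ, contDiff_succ_iff_hasFDerivAt]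
    refine ⟨_, ?_, fun x => PP_hasFDerivAt hD hA hB hc x⟩
    apply ContDiff.sum
    intro i _
    exact (ih (hc.mul (hD i) A 1 (hA i))).smul contDiff_const

lemma PP_fderiv {ι : Type*} [Fintype ι] {N : ℕ} {D : Fin N → (ι → ℝ) → ℂ}
    (hD : ∀ i, Continuous (D i)) {A B : ℝ} (hA : ∀ i ξ, ‖D i ξ‖ ≤ A * (1 + ‖ξ‖) ^ 1)
    (hB : ∀ i ξ, |(D i ξ).re| ≤ B) {c : (ι → ℝ) → ℂ} (hc : Dec c) (x : Fin N → ℝ) (i : Fin N) :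
    fderiv ℝ (PP D c) x (Pi.single i 1) = PP D (fun ξ => D i ξ * c ξ) x := by
  rw [(PP_hasFDerivAt hD hA hB hc x).fderiv]
  simp only [_root_.sum_apply, ContinuousLinearMap.smul_apply, ContinuousLinearMap.comp_apply,
    ContinuousLinearMap.proj_apply, Complex.ofRealCLM_apply, smul_eq_mul]
  rw [Finset.sum_eq_single i]
  · simp
  · intro j _ hj
    simp [Pi.single_apply, hj]
  · simp

def dd (s T : Finset ℕ) (v b : ℕ → ℂ) : ℂ :=
  ∑ j ∈ s, (∏ m ∈ T, (v j - b m)) / ∏ p ∈ s.erase j, (v j - v p)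

lemma dd_one (s T : Finset ℕ) (v b : ℕ → ℂ) (hv : Set.InjOn v s) (h : s.card = T.card + 1) :
    dd s T v b = 1 := by
  have hm : (∏ m ∈ T, (Polynomial.X - Polynomial.C (b m))).Monic := Polynomial.monic_prod_X_sub_C b T
  have hdeg : (∏ m ∈ T, (Polynomial.X - Polynomial.C (b m))).degree = ((T.card : ℕ) : WithBot ℕ) := by
    rw [Polynomial.degree_eq_natDegree hm.ne_zero, Polynomial.natDegree_finsetProd_X_sub_C_eq_card]
  have := Lagrange.leadingCoeff_eq_sum hv (P := ∏ m ∈ T, (Polynomial.X - Polynomial.C (b m)))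
    (by rw [hdeg, h]; norm_cast)
  rw [hm.leadingCoeff] at this
  rw [dd, this]
  refine Finset.sum_congr rfl (fun j _ => ?_)
  rw [Polynomial.eval_prod]
  simp

lemma dd_insert (s T : Finset ℕ) (v b : ℕ → ℂ) (q c : ℕ) (hq : q ∉ s) (hc : c ∉ T)
    (hv : Set.InjOn v (insert q s : Finset ℕ)) :
    dd (insert q s) (insert c T) v b = dd s T v b + (v q - b c) * dd (insert q s) T v b := by
  have h1 : ∀ j, ∏ m ∈ insert c T, (v j - b m) = (v j - v q) * (∏ m ∈ T, (v j - b m)) +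
      (v q - b c) * ∏ m ∈ T, (v j - b m) := by
    intro j; rw [Finset.prod_insert hc]; ring
  have h2 : dd (insert q s) (insert c T) v b =
      ∑ j ∈ insert q s, (v j - v q) * (∏ m ∈ T, (v j - b m)) / ∏ p ∈ (insert q s).erase j, (v j - v p) +
      (v q - b c) * dd (insert q s) T v b := by
    rw [dd, dd, Finset.mul_sum, ← Finset.sum_add_distrib]
    refine Finset.sum_congr rfl (fun j _ => ?_)
    rw [h1]; ring
  rw [h2]
  congr 1
  rw [Finset.sum_insert hq]
  simp only [sub_self, zero_mul, zero_div, zero_add]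
  rw [dd]
  refine Finset.sum_congr rfl (fun j hj => ?_)
  have hjq : j ≠ q := fun h => hq (h ▸ hj)
  rw [Finset.erase_insert_of_ne hjq.symm, Finset.prod_insert (by simp [hq])]
  have : v j - v q ≠ 0 := by
    rw [sub_ne_zero]
    intro h
    exact hjq (hv (by simp [hj]) (by simp) h)
  rw [mul_div_mul_left _ _ this]

lemma dd_zero (v b : ℕ → ℂ) (s : Finset ℕ) : ∀ T : Finset ℕ, Set.InjOn v s → s.card = T.card →
    dd s T v b = ∑ j ∈ s, v j - ∑ m ∈ T, b m := by
  induction s using Finset.induction_on with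
  | empty =>
    intro T _ h
    have : T = ∅ := by rw [← Finset.card_eq_zero, ← h]; simp
    simp [this, dd]
  | insert q s hq ih =>
    intro T hv h
    have hT : T.Nonempty := by rw [← Finset.card_pos, ← h]; simp [hq]
    obtain ⟨c, hc⟩ := hT
    rw [← Finset.insert_erase hc] at h ⊢
    have hc' := Finset.notMem_erase c T
    generalize T.erase c = T' at *
    rw [Finset.card_insert_of_notMem hq, Finset.card_insert_of_notMem hc'] at h
    rw [dd_insert s T' v b q c hq hc' hv, ih T' (hv.mono (by simp)) (by omega),
      dd_one _ _ _ _ hv (by rw [Finset.card_insert_of_notMem hq]; omega), Finset.sum_insert hq, Finset.sum_insert hc']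
    ring

lemma dd_two (v b : ℕ → ℂ) (s : Finset ℕ) : ∀ T : Finset ℕ, Set.InjOn v s → s.card + 1 = T.card →
    dd s T v b = ((∑ m ∈ T, b m - ∑ j ∈ s, v j) ^ 2 - ∑ m ∈ T, b m ^ 2 + ∑ j ∈ s, v j ^ 2) / 2 := by
  induction s using Finset.induction_on with
  | empty =>
    intro T _ h
    obtain ⟨c, rfl⟩ := Finset.card_eq_one.1 h.symm
    simp [dd]
  | insert q s hq ih =>
    intro T hv h
    have hT : T.Nonempty := by rw [← Finset.card_pos, ← h]; simp
    obtain ⟨c, hc⟩ := hT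
    rw [← Finset.insert_erase hc] at h ⊢
    have hc' := Finset.notMem_erase c T
    generalize T.erase c = T' at *
    rw [Finset.card_insert_of_notMem hq, Finset.card_insert_of_notMem hc'] at h
    rw [dd_insert s T' v b q c hq hc' hv, ih T' (hv.mono (by simp)) (by omega),
      dd_zero _ _ _ _ hv (by rw [Finset.card_insert_of_notMem hq]; omega)]
    simp only [Finset.sum_insert hq, Finset.sum_insert hc']
    ring

def del (n0 j0 n j : ℕ) : ℂ := if n = n0 ∧ j = j0 then 1 else 0
def zz (ℏ : ℝ) (γ : GZ) (n k m : ℕ) : ℂ := (γ n k - γ (n + 1) m) / (Complex.I * ℏ)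
def aa (ℏ : ℝ) (γ : GZ) (n s p : ℕ) : ℂ := (γ n s - γ n p) / (Complex.I * ℏ)
def PH (ℏ : ℝ) (N : ℕ) (γ : GZ) : ℂ :=
  ∏ n ∈ Icc 1 (N - 1), ∏ k ∈ Icc 1 n, ∏ m ∈ Icc 1 (n + 1), hpow ℏ (zz ℏ γ n k m)
def PG (ℏ : ℝ) (N n0 j0 : ℕ) (γ : GZ) : ℂ :=
  ∏ n ∈ Icc 1 (N - 1), ∏ k ∈ Icc 1 n, ∏ m ∈ Icc 1 (n + 1),
    Complex.Gamma (zz ℏ γ n k m + del n0 j0 (n + 1) m)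
def PR (ℏ : ℝ) (N n0 j0 : ℕ) (γ : GZ) : ℂ :=
  ∏ n ∈ Icc 1 (N - 1), ∏ s ∈ Icc 1 n, ∏ p ∈ (Icc 1 n).erase s,
    (Complex.Gamma (aa ℏ γ n s p + del n0 j0 n s))⁻¹
def dco (γ : GZ) (n : ℕ) : ℂ := (∑ j ∈ Icc 1 n, γ n j) - ∑ j ∈ Icc 1 (n - 1), γ (n - 1) j
def PE (ℏ : ℝ) (N : ℕ) (x : ℕ → ℝ) (γ : GZ) : ℂ :=
  Complex.exp ((Complex.I / (ℏ : ℂ)) * ∑ n ∈ Icc 1 N, dco γ n * (x n : ℂ))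
def Phi (ℏ : ℝ) (N : ℕ) (x : ℕ → ℝ) (n0 j0 : ℕ) (γ : GZ) : ℂ :=
  PH ℏ N γ * PG ℏ N n0 j0 γ * PR ℏ N n0 j0 γ * PE ℏ N x γ
def gsh (n0 j0 : ℕ) (ζ : ℂ) (γ : GZ) : GZ := fun n j => γ n j + ζ * del n0 j0 n j

lemma toda_eq_Phi (ℏ : ℝ) (N : ℕ) (x : ℕ → ℝ) (γ : GZ) :
    todaIntegrand ℏ N x γ = Phi ℏ N x 0 0 γ := by
  unfold todaIntegrand Phi PH PG PR PE dco
  congr 1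
  rw [← Finset.prod_mul_distrib, ← Finset.prod_mul_distrib]
  refine Finset.prod_congr rfl (fun n hn => ?_)
  rw [div_eq_mul_inv]
  congr 1
  · rw [← Finset.prod_mul_distrib]
    refine Finset.prod_congr rfl (fun k _ => ?_)
    rw [← Finset.prod_mul_distrib]
    refine Finset.prod_congr rfl (fun m _ => ?_)
    simp [zz, del]
  · rw [← Finset.prod_inv_distrib]
    refine Finset.prod_congr rfl (fun k _ => ?_)
    rw [← Finset.prod_inv_distrib]
    refine Finset.prod_congr rfl (fun m _ => ?_)
    have : n ≠ 0 := by simp at hn; omega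
    simp [aa, del, this]

lemma PG_del (ℏ : ℝ) (N n0 j0 : ℕ) (γ : GZ) (hn0 : n0 ≤ N - 1) (hj0 : j0 ∈ Icc 1 n0)
    (hz : ∀ k ∈ Icc 1 (n0 - 1), zz ℏ γ (n0 - 1) k j0 ≠ 0) :
    PG ℏ N n0 j0 γ = PG ℏ N 0 0 γ * ∏ k ∈ Icc 1 (n0 - 1), zz ℏ γ (n0 - 1) k j0 := by
  have hj := Finset.mem_Icc.1 hj0
  have h1 : ∀ n k m, n ∈ Icc 1 (N - 1) → k ∈ Icc 1 n → Complex.Gamma (zz ℏ γ n k m + del n0 j0 (n + 1) m) =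
      Complex.Gamma (zz ℏ γ n k m + del 0 0 (n + 1) m) *
        (if m = j0 then (if n = n0 - 1 then zz ℏ γ n k j0 else 1) else 1) := by
    intro n k m hn hk
    rw [Finset.mem_Icc] at hn
    have e : (n + 1 = n0) = (n = n0 - 1) := by apply propext; omega
    by_cases h1 : m = j0
    · by_cases h2 : n = n0 - 1
      · subst h1
        have := hz k (h2 ▸ hk)
        rw [← h2] at this
        have hn1 : n + 1 = n0 := by omega
        rw [if_pos rfl, if_pos h2, show del n0 m (n + 1) m = 1 from by simp [del, hn1], Complex.Gamma_add_one _ this]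
        simp [del, mul_comm]
      · simp [del, e, h2]
    · simp [del, h1]
  have h2 : PG ℏ N n0 j0 γ = PG ℏ N 0 0 γ * ∏ n ∈ Icc 1 (N - 1), ∏ k ∈ Icc 1 n,
      ∏ m ∈ Icc 1 (n + 1), (if m = j0 then (if n = n0 - 1 then zz ℏ γ n k j0 else 1) else 1) := by
    simp only [PG, ← Finset.prod_mul_distrib]
    refine Finset.prod_congr rfl (fun n hn => Finset.prod_congr rfl (fun k hk =>
      Finset.prod_congr rfl (fun m _ => h1 n k m hn hk)))
  rw [h2]
  congr 1
  rw [Finset.prod_eq_single (n0 - 1)]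
  · refine Finset.prod_congr rfl (fun k _ => ?_)
    rw [Finset.prod_ite_eq', if_pos (by rw [Finset.mem_Icc]; omega)]
    simp
  · intro n _ hn
    simp [hn]
  · intro hn
    rw [Finset.mem_Icc] at hn
    have : n0 - 1 = 0 := by omega
    rw [this]
    rfl

lemma PR_del (ℏ : ℝ) (N n0 j0 : ℕ) (γ : GZ) (hn0 : n0 ≤ N - 1) (hj0 : j0 ∈ Icc 1 n0) :
    PR ℏ N 0 0 γ = PR ℏ N n0 j0 γ * ∏ p ∈ (Icc 1 n0).erase j0, aa ℏ γ n0 j0 p := by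
  have hj := Finset.mem_Icc.1 hj0
  have h1 : ∀ n s p, n ∈ Icc 1 (N - 1) → (Complex.Gamma (aa ℏ γ n s p + del 0 0 n s))⁻¹ =
      (Complex.Gamma (aa ℏ γ n s p + del n0 j0 n s))⁻¹ *
        (if n = n0 then (if s = j0 then aa ℏ γ n s p else 1) else 1) := by
    intro n s p hn
    have : n ≠ 0 := by simp at hn; omega
    by_cases h1 : n = n0
    · by_cases h2 : s = j0
      · subst h1 h2
        simp only [del, this, false_and, if_false, add_zero, and_self, if_true]
        rw [Complex.one_div_Gamma_eq_self_mul_one_div_Gamma_add_one, mul_comm]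
      · simp [del, this, h2]
    · simp [del, this, h1]
  have h2 : PR ℏ N 0 0 γ = PR ℏ N n0 j0 γ * ∏ n ∈ Icc 1 (N - 1), ∏ s ∈ Icc 1 n,
      ∏ p ∈ (Icc 1 n).erase s, (if n = n0 then (if s = j0 then aa ℏ γ n s p else 1) else 1) := by
    simp only [PR, ← Finset.prod_mul_distrib]
    refine Finset.prod_congr rfl (fun n hn => Finset.prod_congr rfl (fun k hk =>
      Finset.prod_congr rfl (fun m _ => h1 n k m hn)))
  rw [h2]
  congr 1
  rw [Finset.prod_eq_single n0, Finset.prod_eq_single j0]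
  · simp
  · intro s _ hs; simp [hs]
  · intro h; exact absurd hj0 h
  · intro n _ hn; simp [hn]
  · intro h; rw [Finset.mem_Icc] at h; omega

lemma zz_gsh (ℏ : ℝ) (hℏ : 0 < ℏ) (γ : GZ) (n0 j0 n k m : ℕ) :
    zz ℏ (gsh n0 j0 (Complex.I * ℏ) γ) n k m =
      zz ℏ γ n k m + del n0 j0 n k - del n0 j0 (n + 1) m := by
  have h1 : (ℏ : ℂ) ≠ 0 := by exact_mod_cast hℏ.ne'
  have h2 := Complex.I_ne_zero
  simp only [zz, gsh]
  field_simp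
  ring

lemma aa_gsh (ℏ : ℝ) (hℏ : 0 < ℏ) (γ : GZ) (n0 j0 n k m : ℕ) :
    aa ℏ (gsh n0 j0 (Complex.I * ℏ) γ) n k m =
      aa ℏ γ n k m + del n0 j0 n k - del n0 j0 n m := by
  have h1 : (ℏ : ℂ) ≠ 0 := by exact_mod_cast hℏ.ne'
  have h2 := Complex.I_ne_zero
  simp only [aa, gsh]
  field_simp
  ring

lemma PG_shift (ℏ : ℝ) (hℏ : 0 < ℏ) (N n0 j0 : ℕ) (γ : GZ) (hn0 : n0 ≤ N - 1) (hj0 : j0 ∈ Icc 1 n0)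
    (hz : ∀ m ∈ Icc 1 (n0 + 1), zz ℏ γ n0 j0 m ≠ 0) :
    PG ℏ N n0 j0 (gsh n0 j0 (Complex.I * ℏ) γ) = PG ℏ N 0 0 γ * ∏ m ∈ Icc 1 (n0 + 1), zz ℏ γ n0 j0 m := by
  have hj := Finset.mem_Icc.1 hj0
  have h1 : ∀ n k m, n ∈ Icc 1 (N - 1) → m ∈ Icc 1 (n + 1) →
      Complex.Gamma (zz ℏ (gsh n0 j0 (Complex.I * ℏ) γ) n k m + del n0 j0 (n + 1) m) =
      Complex.Gamma (zz ℏ γ n k m + del 0 0 (n + 1) m) *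
        (if n = n0 then (if k = j0 then zz ℏ γ n k m else 1) else 1) := by
    intro n k m hn hm
    rw [zz_gsh ℏ hℏ, sub_add_cancel]
    have : n ≠ 0 := by simp at hn; omega
    by_cases h1 : n = n0
    · by_cases h2 : k = j0
      · subst h1 h2
        simp only [del, and_self, if_true, Nat.add_eq_zero_iff, one_ne_zero, and_false, false_and, if_false, add_zero]
        rw [Complex.Gamma_add_one _ (hz m hm), mul_comm]
      · simp [del, h2]
    · simp [del, h1]
  have h2 : PG ℏ N n0 j0 (gsh n0 j0 (Complex.I * ℏ) γ) = PG ℏ N 0 0 γ * ∏ n ∈ Icc 1 (N - 1), ∏ k ∈ Icc 1 n,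
      ∏ m ∈ Icc 1 (n + 1), (if n = n0 then (if k = j0 then zz ℏ γ n k m else 1) else 1) := by
    simp only [PG, ← Finset.prod_mul_distrib]
    refine Finset.prod_congr rfl (fun n hn => Finset.prod_congr rfl (fun k hk =>
      Finset.prod_congr rfl (fun m hm => h1 n k m hn hm)))
  rw [h2]
  congr 1
  rw [Finset.prod_eq_single n0, Finset.prod_eq_single j0]
  · simp
  · intro s _ hs; simp [hs]
  · intro h; exact absurd hj0 h
  · intro n _ hn; simp [hn]
  · intro h; rw [Finset.mem_Icc] at h; omega

lemma prod_pairs (S : Finset ℕ) (j : ℕ) (hj : j ∈ S) (f : ℕ → ℕ → ℂ) :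
    ∏ s ∈ S, ∏ p ∈ S.erase s, f s p =
      ∏ s ∈ S.erase j, (f j s * f s j * ∏ p ∈ (S.erase s).erase j, f s p) := by
  rw [← Finset.mul_prod_erase S _ hj]
  simp only [mul_assoc]
  rw [Finset.prod_mul_distrib]
  congr 1
  refine Finset.prod_congr rfl (fun s hs => ?_)
  rw [Finset.mul_prod_erase]
  rw [Finset.mem_erase] at hs ⊢
  exact ⟨hs.1.symm, hj⟩

lemma aa_neg (ℏ : ℝ) (γ : GZ) (n s p : ℕ) : aa ℏ γ n s p = - aa ℏ γ n p s := by
  simp only [aa]; ring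

lemma PR_shift (ℏ : ℝ) (hℏ : 0 < ℏ) (N n0 j0 : ℕ) (γ : GZ) (hn0 : n0 ≤ N - 1) (hj0 : j0 ∈ Icc 1 n0) :
    PR ℏ N n0 j0 (gsh n0 j0 (Complex.I * ℏ) γ) = (-1) ^ (n0 - 1) * PR ℏ N n0 j0 γ := by
  have hj := Finset.mem_Icc.1 hj0
  have hmem : n0 ∈ Icc 1 (N - 1) := by rw [Finset.mem_Icc]; omega
  simp only [PR]
  rw [← Finset.mul_prod_erase _ _ hmem, ← Finset.mul_prod_erase _ _ hmem, ← mul_assoc]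
  congr 1
  · rw [prod_pairs _ _ hj0, prod_pairs _ _ hj0]
    have hcard : ((Icc 1 n0).erase j0).card = n0 - 1 := by
      rw [Finset.card_erase_of_mem hj0]; simp
    rw [← hcard, ← Finset.prod_const, ← Finset.prod_mul_distrib]
    refine Finset.prod_congr rfl (fun s hs => ?_)
    have hsj : s ≠ j0 := (Finset.mem_erase.1 hs).1
    rw [← mul_assoc]
    congr 1
    · rw [aa_gsh ℏ hℏ, aa_gsh ℏ hℏ, aa_neg ℏ γ n0 s j0]
      generalize aa ℏ γ n0 j0 s = a
      simp only [del, hsj, and_false, if_false, true_and, if_true, add_zero, sub_zero]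
      rw [Complex.one_div_Gamma_eq_self_mul_one_div_Gamma_add_one (-a - 1),
        Complex.one_div_Gamma_eq_self_mul_one_div_Gamma_add_one (a + 1)]
      rw [sub_add_cancel]
      ring
    · refine Finset.prod_congr rfl (fun p hp => ?_)
      have hpj : p ≠ j0 := (Finset.mem_erase.1 hp).1
      rw [aa_gsh ℏ hℏ]
      simp [del, hsj, hpj]
  · refine Finset.prod_congr rfl (fun n hn => Finset.prod_congr rfl (fun s _ => Finset.prod_congr rfl (fun p _ => ?_)))
    have hnn : n ≠ n0 := (Finset.mem_erase.1 hn).1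
    rw [aa_gsh ℏ hℏ]
    simp [del, hnn]

lemma hpow_sum {α : Type*} (ℏ : ℝ) (S : Finset α) (f : α → ℂ) :
    ∏ i ∈ S, hpow ℏ (f i) = hpow ℏ (∑ i ∈ S, f i) := by
  simp only [hpow, ← Complex.exp_sum, Finset.sum_mul]

lemma PH_eq (ℏ : ℝ) (N : ℕ) (γ : GZ) : PH ℏ N γ =
    hpow ℏ (∑ n ∈ Icc 1 (N - 1), ∑ k ∈ Icc 1 n, ∑ m ∈ Icc 1 (n + 1), zz ℏ γ n k m) := by
  simp only [PH, hpow_sum]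

lemma PH_shift (ℏ : ℝ) (hℏ : 0 < ℏ) (N n0 j0 : ℕ) (γ : GZ) (hn0 : n0 ≤ N - 1) (hj0 : j0 ∈ Icc 1 n0) :
    PH ℏ N (gsh n0 j0 (Complex.I * ℏ) γ) = (ℏ : ℂ) ^ 2 * PH ℏ N γ := by
  have hj := Finset.mem_Icc.1 hj0
  have h1 : ∑ n ∈ Icc 1 (N - 1), ∑ k ∈ Icc 1 n, ∑ m ∈ Icc 1 (n + 1), del n0 j0 n k = (n0 : ℂ) + 1 := by
    rw [Finset.sum_eq_single n0, Finset.sum_eq_single j0]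
    · simp [del]
    · intro s _ hs; simp [del, hs]
    · intro h; exact absurd hj0 h
    · intro n _ hn; simp [del, hn]
    · intro h; rw [Finset.mem_Icc] at h; omega
  have h2 : ∑ n ∈ Icc 1 (N - 1), ∑ k ∈ Icc 1 n, ∑ m ∈ Icc 1 (n + 1), del n0 j0 (n + 1) m = (n0 : ℂ) - 1 := by
    rw [Finset.sum_eq_single (n0 - 1)]
    · have : n0 - 1 + 1 = n0 := by omega
      simp only [del, this, true_and, Finset.sum_ite_eq', if_pos hj0]
      simp
      rw [Nat.cast_sub (by omega)]; simp
    · intro n hn hne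
      have : n + 1 ≠ n0 := by omega
      simp [del, this]
    · intro hn
      rw [Finset.mem_Icc] at hn
      have : n0 - 1 = 0 := by omega
      rw [this]
      rfl
  have h3 : hpow ℏ 2 = (ℏ : ℂ) ^ 2 := by
    rw [hpow, ← Nat.cast_ofNat (R := ℂ), Complex.exp_nat_mul, ← Complex.ofReal_exp, Real.exp_log hℏ]
  rw [PH_eq, PH_eq, ← h3, hpow, hpow, hpow, ← Complex.exp_add, ← add_mul]
  simp only [zz_gsh ℏ hℏ, Finset.sum_sub_distrib, Finset.sum_add_distrib, h1, h2]
  congr 2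
  ring

lemma dco_gsh (γ : GZ) (n0 j0 : ℕ) (ζ : ℂ) (hj0 : j0 ∈ Icc 1 n0) (n : ℕ) (hn : 1 ≤ n) :
    dco (gsh n0 j0 ζ γ) n = dco γ n + ζ * ((if n = n0 then 1 else 0) - (if n = n0 + 1 then 1 else 0)) := by
  have h1 : ∀ n, ∑ j ∈ Icc 1 n, gsh n0 j0 ζ γ n j = ∑ j ∈ Icc 1 n, γ n j + ζ * (if n = n0 then 1 else 0) := by
    intro n
    simp only [gsh, Finset.sum_add_distrib, ← Finset.mul_sum]
    congr 2
    by_cases h : n = n0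
    · subst h
      simp only [del, true_and, Finset.sum_ite_eq', if_pos hj0, if_true]
    · simp [del, h]
  have e : (n - 1 = n0) = (n = n0 + 1) := by apply propext; omega
  simp only [dco, h1, e]
  ring

lemma PE_shift (ℏ : ℝ) (hℏ : 0 < ℏ) (N n0 j0 : ℕ) (x : ℕ → ℝ) (γ : GZ) (hn0 : n0 ≤ N - 1) (hj0 : j0 ∈ Icc 1 n0) :
    PE ℏ N x (gsh n0 j0 (Complex.I * ℏ) γ) = Complex.exp (-((x n0 : ℂ) - x (n0 + 1))) * PE ℏ N x γ := by
  have hj := Finset.mem_Icc.1 hj0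
  have h0 : (ℏ : ℂ) ≠ 0 := by exact_mod_cast hℏ.ne'
  rw [PE, PE, ← Complex.exp_add]
  congr 1
  have : ∑ n ∈ Icc 1 N, dco (gsh n0 j0 (Complex.I * ℏ) γ) n * (x n : ℂ) =
      ∑ n ∈ Icc 1 N, dco γ n * (x n : ℂ) + Complex.I * ℏ * (x n0 - x (n0 + 1)) := by
    have : ∀ n ∈ Icc 1 N, dco (gsh n0 j0 (Complex.I * ℏ) γ) n * (x n : ℂ) = dco γ n * (x n : ℂ) +
        Complex.I * ℏ * ((if n = n0 then (x n : ℂ) else 0) - (if n = n0 + 1 then (x n : ℂ) else 0)) := by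
      intro n hn
      rw [dco_gsh γ n0 j0 _ hj0 n (Finset.mem_Icc.1 hn).1]
      split_ifs <;> ring
    rw [Finset.sum_congr rfl this, Finset.sum_add_distrib, ← Finset.mul_sum, Finset.sum_sub_distrib,
      Finset.sum_ite_eq', Finset.sum_ite_eq', if_pos (by rw [Finset.mem_Icc]; omega), if_pos (by rw [Finset.mem_Icc]; omega)]
  rw [this]
  have hI := Complex.I_mul_I
  field_simp
  linear_combination ((x n0 : ℂ) - x (n0 + 1)) * (ℏ : ℂ) * hI

lemma PR_zero (ℏ : ℝ) (N n0 j0 : ℕ) (γ : GZ) (hn0 : n0 ∈ Icc 1 (N - 1))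
    (h : ¬ Set.InjOn (γ n0) (Icc 1 n0)) : PR ℏ N n0 j0 γ = 0 := by
  have : ∃ s ∈ Icc 1 n0, ∃ p ∈ (Icc 1 n0).erase s, s ≠ j0 ∧ γ n0 s = γ n0 p := by
    simp only [Set.InjOn] at h
    push Not at h
    obtain ⟨s, hs, p, hp, he, hne⟩ := h
    by_cases hsj : s = j0
    · exact ⟨p, hp, s, Finset.mem_erase.2 ⟨hne, hs⟩, fun h' => hne (hsj.trans h'.symm), he.symm⟩
    · exact ⟨s, hs, p, Finset.mem_erase.2 ⟨hne.symm, hp⟩, hsj, he⟩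
  obtain ⟨s, hs, p, hp, hsj, he⟩ := this
  refine Finset.prod_eq_zero hn0 (Finset.prod_eq_zero hs (Finset.prod_eq_zero hp ?_))
  simp [aa, he, del, hsj]

lemma Phi_sum (ℏ : ℝ) (hℏ : 0 < ℏ) (N n0 : ℕ) (x : ℕ → ℝ) (γ : GZ) (hn0 : n0 ∈ Icc 1 (N - 1))
    (hz : ∀ k ∈ Icc 1 (n0 - 1), ∀ j ∈ Icc 1 n0, zz ℏ γ (n0 - 1) k j ≠ 0) :
    ∑ j ∈ Icc 1 n0, Phi ℏ N x n0 j γ = (-1) ^ (n0 - 1) * Phi ℏ N x 0 0 γ := by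
  have hn := Finset.mem_Icc.1 hn0
  by_cases hinj : Set.InjOn (γ n0) (Icc 1 n0)
  · have h0 : (Complex.I * ℏ : ℂ) ≠ 0 := mul_ne_zero Complex.I_ne_zero (by exact_mod_cast hℏ.ne')
    have key : ∀ j ∈ Icc 1 n0, Phi ℏ N x n0 j γ = (-1) ^ (n0 - 1) * Phi ℏ N x 0 0 γ *
        ((∏ m ∈ Icc 1 (n0 - 1), (γ n0 j - γ (n0 - 1) m)) / ∏ p ∈ (Icc 1 n0).erase j, (γ n0 j - γ n0 p)) := by
      intro j hj
      have e1 : ∏ k ∈ Icc 1 (n0 - 1), zz ℏ γ (n0 - 1) k j =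
          (-1) ^ (n0 - 1) * (∏ m ∈ Icc 1 (n0 - 1), (γ n0 j - γ (n0 - 1) m)) / (Complex.I * ℏ) ^ (n0 - 1) := by
        have hc1 : (-1 : ℂ) ^ (n0 - 1) = ∏ _k ∈ Icc 1 (n0 - 1), (-1 : ℂ) := by simp
        have hc2 : (Complex.I * ℏ : ℂ) ^ (n0 - 1) = ∏ _k ∈ Icc 1 (n0 - 1), (Complex.I * ℏ : ℂ) := by
          rw [Finset.prod_const, Nat.card_Icc, Nat.add_sub_cancel]
        rw [hc1, hc2, ← Finset.prod_mul_distrib, ← Finset.prod_div_distrib]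
        refine Finset.prod_congr rfl (fun k _ => ?_)
        simp only [zz, show n0 - 1 + 1 = n0 by omega]
        ring
      have e2 : ∏ p ∈ (Icc 1 n0).erase j, aa ℏ γ n0 j p =
          (∏ p ∈ (Icc 1 n0).erase j, (γ n0 j - γ n0 p)) / (Complex.I * ℏ) ^ (n0 - 1) := by
        have hc : ((Icc 1 n0).erase j).card = n0 - 1 := by rw [Finset.card_erase_of_mem hj]; simp
        rw [← hc, ← Finset.prod_const, ← Finset.prod_div_distrib]
        rfl
      have hne : ∏ p ∈ (Icc 1 n0).erase j, (γ n0 j - γ n0 p) ≠ 0 := by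
        rw [Finset.prod_ne_zero_iff]
        intro p hp
        rw [sub_ne_zero]
        intro h
        exact (Finset.mem_erase.1 hp).1 (hinj (Finset.mem_erase.1 hp).2 hj h.symm)
      simp only [Phi]
      rw [PG_del ℏ N n0 j γ hn.2 hj (fun k hk => hz k hk j hj), PR_del ℏ N n0 j γ hn.2 hj, e1, e2]
      have := pow_ne_zero (n0 - 1) h0
      field_simp
    rw [Finset.sum_congr rfl key, ← Finset.mul_sum]
    have := dd_one (Icc 1 n0) (Icc 1 (n0 - 1)) (γ n0) (γ (n0 - 1)) hinj (by simp; omega)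
    rw [dd] at this
    rw [this, mul_one]
  · have h1 : Phi ℏ N x 0 0 γ = 0 := by
      rw [Phi, PR_del ℏ N n0 n0 γ hn.2 (by simp [hn.1]), PR_zero ℏ N n0 n0 γ hn0 hinj]
      simp
    rw [h1, mul_zero]
    apply Finset.sum_eq_zero
    intro j _
    rw [Phi, PR_zero ℏ N n0 j γ hn0 hinj]
    simp

lemma Phi_sum_shift (ℏ : ℝ) (hℏ : 0 < ℏ) (N n0 : ℕ) (x : ℕ → ℝ) (γ : GZ) (hn0 : n0 ∈ Icc 1 (N - 1))
    (hz : ∀ j ∈ Icc 1 n0, ∀ m ∈ Icc 1 (n0 + 1), zz ℏ γ n0 j m ≠ 0) :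
    ∑ j ∈ Icc 1 n0, Phi ℏ N x n0 j (gsh n0 j (Complex.I * ℏ) γ) =
      (-1) ^ (n0 - 1) * Complex.exp (-((x n0 : ℂ) - x (n0 + 1))) *
       ((∑ m ∈ Icc 1 (n0 + 1), γ (n0 + 1) m ^ 2 - ∑ j ∈ Icc 1 n0, γ n0 j ^ 2 - dco γ (n0 + 1) ^ 2) / 2) *
       Phi ℏ N x 0 0 γ := by
  have hn := Finset.mem_Icc.1 hn0
  have key0 : ∀ j ∈ Icc 1 n0, Phi ℏ N x n0 j (gsh n0 j (Complex.I * ℏ) γ) =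
      (ℏ : ℂ) ^ 2 * PH ℏ N γ * (PG ℏ N 0 0 γ * ∏ m ∈ Icc 1 (n0 + 1), zz ℏ γ n0 j m) *
      ((-1) ^ (n0 - 1) * PR ℏ N n0 j γ) * (Complex.exp (-((x n0 : ℂ) - x (n0 + 1))) * PE ℏ N x γ) := by
    intro j hj
    rw [Phi, PH_shift ℏ hℏ N n0 j γ hn.2 hj, PG_shift ℏ hℏ N n0 j γ hn.2 hj (hz j hj),
      PR_shift ℏ hℏ N n0 j γ hn.2 hj, PE_shift ℏ hℏ N n0 j x γ hn.2 hj]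
  by_cases hinj : Set.InjOn (γ n0) (Icc 1 n0)
  · have h0 : (Complex.I * ℏ : ℂ) ≠ 0 := mul_ne_zero Complex.I_ne_zero (by exact_mod_cast hℏ.ne')
    have key : ∀ j ∈ Icc 1 n0, Phi ℏ N x n0 j (gsh n0 j (Complex.I * ℏ) γ) =
        -((-1) ^ (n0 - 1) * Complex.exp (-((x n0 : ℂ) - x (n0 + 1))) * Phi ℏ N x 0 0 γ) *
        ((∏ m ∈ Icc 1 (n0 + 1), (γ n0 j - γ (n0 + 1) m)) / ∏ p ∈ (Icc 1 n0).erase j, (γ n0 j - γ n0 p)) := by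
      intro j hj
      have e1 : ∏ m ∈ Icc 1 (n0 + 1), zz ℏ γ n0 j m =
          (∏ m ∈ Icc 1 (n0 + 1), (γ n0 j - γ (n0 + 1) m)) / (Complex.I * ℏ) ^ (n0 + 1) := by
        have hc : (Complex.I * ℏ : ℂ) ^ (n0 + 1) = ∏ _k ∈ Icc 1 (n0 + 1), (Complex.I * ℏ : ℂ) := by
          rw [Finset.prod_const, Nat.card_Icc, Nat.add_sub_cancel]
        rw [hc, ← Finset.prod_div_distrib]
        rfl
      have e2 : ∏ p ∈ (Icc 1 n0).erase j, aa ℏ γ n0 j p =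
          (∏ p ∈ (Icc 1 n0).erase j, (γ n0 j - γ n0 p)) / (Complex.I * ℏ) ^ (n0 - 1) := by
        have hc : ((Icc 1 n0).erase j).card = n0 - 1 := by rw [Finset.card_erase_of_mem hj]; simp
        rw [← hc, ← Finset.prod_const, ← Finset.prod_div_distrib]
        rfl
      have hne : ∏ p ∈ (Icc 1 n0).erase j, (γ n0 j - γ n0 p) ≠ 0 := by
        rw [Finset.prod_ne_zero_iff]
        intro p hp
        rw [sub_ne_zero]
        intro h
        exact (Finset.mem_erase.1 hp).1 (hinj (Finset.mem_erase.1 hp).2 hj h.symm)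
      have e3 : (Complex.I * ℏ : ℂ) ^ (n0 + 1) = -(ℏ : ℂ) ^ 2 * (Complex.I * ℏ) ^ (n0 - 1) := by
        have : n0 + 1 = (n0 - 1) + 2 := by omega
        rw [this, pow_add]
        have hI := Complex.I_sq
        linear_combination (Complex.I * ℏ) ^ (n0 - 1) * (ℏ : ℂ) ^ 2 * hI
      rw [key0 j hj, Phi, PR_del ℏ N n0 j γ hn.2 hj, e1, e2, e3]
      have := pow_ne_zero (n0 - 1) h0
      have h1 : (ℏ : ℂ) ≠ 0 := by exact_mod_cast hℏ.ne'
      generalize (Complex.I * ℏ : ℂ) ^ (n0 - 1) = Z at *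
      field_simp
    rw [Finset.sum_congr rfl key, ← Finset.mul_sum]
    have := dd_two (γ n0) (γ (n0 + 1)) (Icc 1 n0) (Icc 1 (n0 + 1)) hinj (by simp)
    rw [dd] at this
    rw [this, dco, Nat.add_sub_cancel]
    ring
  · have h1 : Phi ℏ N x 0 0 γ = 0 := by
      rw [Phi, PR_del ℏ N n0 n0 γ hn.2 (by simp [hn.1]), PR_zero ℏ N n0 n0 γ hn0 hinj]
      simp
    rw [h1, mul_zero]
    apply Finset.sum_eq_zero
    intro j hj
    rw [key0 j hj, PR_zero ℏ N n0 j γ hn0 hinj]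
    simp

def Bd {α : Type*} (K : α → ℝ) (f : α → ℂ) (e : α → ℝ) : Prop :=
  ∃ C : ℝ, 0 ≤ C ∧ ∃ p : ℕ, ∀ a, ‖f a‖ ≤ C * (1 + K a) ^ p * Real.exp (e a)

lemma Bd.mul {α : Type*} {K : α → ℝ} (hK : ∀ a, 0 ≤ K a) {f g : α → ℂ} {e e' : α → ℝ}
    (hf : Bd K f e) (hg : Bd K g e') : Bd K (fun a => f a * g a) (fun a => e a + e' a) := by
  obtain ⟨C, hC, p, h⟩ := hf
  obtain ⟨C', hC', p', h'⟩ := hg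
  refine ⟨C * C', mul_nonneg hC hC', p + p', fun a => ?_⟩
  have := hK a
  rw [norm_mul, Real.exp_add, pow_add]
  calc _ ≤ (C * (1 + K a) ^ p * Real.exp (e a)) * (C' * (1 + K a) ^ p' * Real.exp (e' a)) :=
        mul_le_mul (h a) (h' a) (norm_nonneg _) (by positivity)
    _ = _ := by ring

lemma Bd.prod {α β : Type*} {K : α → ℝ} (hK : ∀ a, 0 ≤ K a) (S : Finset β) {f : β → α → ℂ}
    {e : β → α → ℝ} (h : ∀ i ∈ S, Bd K (f i) (e i)) :
    Bd K (fun a => ∏ i ∈ S, f i a) (fun a => ∑ i ∈ S, e i a) := by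
  classical
  induction S using Finset.induction_on with
  | empty => exact ⟨1, zero_le_one, 0, fun a => by simp⟩
  | insert i S hi ih =>
    simp only [Finset.prod_insert hi, Finset.sum_insert hi]
    exact (h i (Finset.mem_insert_self _ _)).mul hK (ih (fun j hj => h j (Finset.mem_insert_of_mem hj)))

lemma Bd.exp {α : Type*} {K : α → ℝ} (g : α → ℂ) (M : ℝ) (hg : ∀ a, (g a).re ≤ M) :
    Bd K (fun a => Complex.exp (g a)) (fun _ => 0) :=
  ⟨Real.exp M, (Real.exp_pos _).le, 0, fun a => by
    rw [Complex.norm_exp]; simpa using hg a⟩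

lemma aux_pow {t K B : ℝ} (hK : 0 ≤ K) (ht : |t| ≤ B * (1 + K)) (hB : 0 ≤ B) (p : ℕ) :
    (1 + |t|) ^ p ≤ (1 + B) ^ p * (1 + K) ^ p := by
  rw [← mul_pow]
  have := abs_nonneg t
  apply pow_le_pow_left₀ (by positivity)
  nlinarith

lemma Bd.gam {α : Type*} {K : α → ℝ} (hK : ∀ a, 0 ≤ K a) (w : α → ℂ) (δ M B : ℝ) (hδ : 0 < δ) (hB : 0 ≤ B)
    (h1 : ∀ a, δ ≤ (w a).re) (h2 : ∀ a, (w a).re ≤ M) (h3 : ∀ a, |(w a).im| ≤ B * (1 + K a)) :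
    Bd K (fun a => Complex.Gamma (w a)) (fun a => -(Real.pi / 2 * |(w a).im|)) := by
  obtain ⟨C, hC, p, h⟩ := gam_upper δ M hδ
  refine ⟨C * (1 + B) ^ p, by positivity, p, fun a => (h _ (h1 a) (h2 a)).trans ?_⟩
  refine mul_le_mul_of_nonneg_right ?_ (Real.exp_pos _).le
  rw [mul_assoc]
  exact mul_le_mul_of_nonneg_left (aux_pow (hK a) (h3 a) hB p) hC

lemma Bd.rgam {α : Type*} {K : α → ℝ} (hK : ∀ a, 0 ≤ K a) (w : α → ℂ) (M B : ℝ) (hB : 0 ≤ B)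
    (h2 : ∀ a, |(w a).re| ≤ M) (h3 : ∀ a, |(w a).im| ≤ B * (1 + K a)) :
    Bd K (fun a => (Complex.Gamma (w a))⁻¹) (fun a => (Real.pi / 2 * |(w a).im|)) := by
  obtain ⟨C, hC, p, h⟩ := rgam_upper M
  refine ⟨C * (1 + B) ^ p, by positivity, p, fun a => (h _ (h2 a)).trans ?_⟩
  refine mul_le_mul_of_nonneg_right ?_ (Real.exp_pos _).le
  rw [mul_assoc]
  exact mul_le_mul_of_nonneg_left (aux_pow (hK a) (h3 a) hB p) hC

lemma div_Ih_re (ℏ : ℝ) (hℏ : 0 < ℏ) (w : ℂ) : (w / (Complex.I * ℏ)).re = w.im / ℏ := by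
  have h1 : (ℏ : ℂ) ≠ 0 := by exact_mod_cast hℏ.ne'
  have : w / (Complex.I * ℏ) = (-Complex.I * w) / (ℏ : ℂ) := by
    have hI := Complex.I_mul_I
    field_simp
    simp
  rw [this, Complex.div_ofReal_re]
  simp

lemma div_Ih_im (ℏ : ℝ) (hℏ : 0 < ℏ) (w : ℂ) : (w / (Complex.I * ℏ)).im = -w.re / ℏ := by
  have h1 : (ℏ : ℂ) ≠ 0 := by exact_mod_cast hℏ.ne'
  have : w / (Complex.I * ℏ) = (-Complex.I * w) / (ℏ : ℂ) := by
    have hI := Complex.I_mul_I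
    field_simp
    simp
  rw [this, Complex.div_ofReal_im]
  simp

lemma del_cases (n0 j0 n j : ℕ) : del n0 j0 n j = 0 ∨ del n0 j0 n j = 1 := by
  unfold del; split_ifs <;> simp

lemma del_im (n0 j0 n j : ℕ) : (del n0 j0 n j).im = 0 := by
  rcases del_cases n0 j0 n j with h | h <;> simp [h]

lemma del_re (n0 j0 n j : ℕ) : 0 ≤ (del n0 j0 n j).re ∧ (del n0 j0 n j).re ≤ 1 := by
  rcases del_cases n0 j0 n j with h | h <;> simp [h]

lemma Phi_Bd {α : Type*} {K : α → ℝ} (hK : ∀ a, 0 ≤ K a) (ℏ : ℝ) (hℏ : 0 < ℏ) (N : ℕ)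
    (x : ℕ → ℝ) (n0 j0 : ℕ) (γ : α → GZ) (B δ : ℝ) (hB : 0 ≤ B) (hδ : 0 < δ)
    (hre : ∀ a, ∀ n ≤ N, ∀ j ∈ Icc 1 n, |(γ a n j).re| ≤ B * (1 + K a))
    (him : ∀ a, ∀ n ≤ N, ∀ j ∈ Icc 1 n, |(γ a n j).im| ≤ B)
    (hd : ∀ a, ∀ n ∈ Icc 1 (N - 1), ∀ k ∈ Icc 1 n, ∀ m ∈ Icc 1 (n + 1),
      δ ≤ (zz ℏ (γ a) n k m + del n0 j0 (n + 1) m).re) :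
    Bd K (fun a => Phi ℏ N x n0 j0 (γ a))
      (fun a => Real.pi / (2 * ℏ) * tE N (fun n j => (γ a n j).re)) := by
  have hR : ∀ a, ∀ n ≤ N, ∀ j ∈ Icc 1 n, ∀ n' ≤ N, ∀ j' ∈ Icc 1 n', |-(γ a n j - γ a n' j').re / ℏ| ≤ 2 * B / ℏ * (1 + K a) := by
    intro a n hn j hj n' hn' j' hj'
    rw [abs_div, abs_of_pos hℏ, abs_neg, Complex.sub_re, div_mul_eq_mul_div]
    gcongr
    have := abs_sub (γ a n j).re (γ a n' j').re
    have := hre a n hn j hj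
    have := hre a n' hn' j' hj'
    linarith
  have hI : ∀ a, ∀ n ≤ N, ∀ j ∈ Icc 1 n, ∀ n' ≤ N, ∀ j' ∈ Icc 1 n', |(γ a n j - γ a n' j').im / ℏ| ≤ 2 * B / ℏ := by
    intro a n hn j hj n' hn' j' hj'
    rw [abs_div, abs_of_pos hℏ, Complex.sub_im]
    gcongr
    have := abs_sub (γ a n j).im (γ a n' j').im
    have := him a n hn j hj
    have := him a n' hn' j' hj'
    linarith
  have b1 : Bd K (fun a => PH ℏ N (γ a)) (fun _ => ∑ n ∈ Icc 1 (N - 1), ∑ k ∈ Icc 1 n, ∑ m ∈ Icc 1 (n + 1), 0) := by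
    refine Bd.prod hK _ (fun n hn => Bd.prod hK _ (fun k hk => Bd.prod hK _ (fun m hm => ?_)))
    rw [Finset.mem_Icc] at hn
    refine Bd.exp _ (2 * B / ℏ * |Real.log ℏ|) (fun a => ?_)
    rw [Complex.re_mul_ofReal, zz, div_Ih_re ℏ hℏ]
    refine (le_abs_self _).trans ?_
    rw [abs_mul]
    gcongr
    exact hI a n (by omega) k hk (n + 1) (by omega) m hm
  have b2 : Bd K (fun a => PG ℏ N n0 j0 (γ a)) (fun a => ∑ n ∈ Icc 1 (N - 1), ∑ k ∈ Icc 1 n, ∑ m ∈ Icc 1 (n + 1),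
      -(Real.pi / 2 * |(zz ℏ (γ a) n k m + del n0 j0 (n + 1) m).im|)) := by
    refine Bd.prod hK _ (fun n hn => Bd.prod hK _ (fun k hk => Bd.prod hK _ (fun m hm => ?_)))
    have hn' := Finset.mem_Icc.1 hn
    refine Bd.gam hK _ δ (2 * B / ℏ + 1) (2 * B / ℏ) hδ (by positivity) (fun a => hd a n hn k hk m hm) (fun a => ?_) (fun a => ?_)
    · rw [Complex.add_re, zz, div_Ih_re ℏ hℏ]
      have := hI a n (by omega) k hk (n + 1) (by omega) m hm
      have := (abs_le.1 this).2
      have := (del_re n0 j0 (n + 1) m).2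
      linarith
    · rw [Complex.add_im, zz, div_Ih_im ℏ hℏ, del_im, add_zero]
      exact hR a n (by omega) k hk (n + 1) (by omega) m hm
  have b3 : Bd K (fun a => PR ℏ N n0 j0 (γ a)) (fun a => ∑ n ∈ Icc 1 (N - 1), ∑ s ∈ Icc 1 n, ∑ p ∈ (Icc 1 n).erase s,
      (Real.pi / 2 * |(aa ℏ (γ a) n s p + del n0 j0 n s).im|)) := by
    refine Bd.prod hK _ (fun n hn => Bd.prod hK _ (fun s hs => Bd.prod hK _ (fun p hp => ?_)))
    have hn' := Finset.mem_Icc.1 hn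
    have hp' := (Finset.mem_erase.1 hp).2
    refine Bd.rgam hK _ (2 * B / ℏ + 1) (2 * B / ℏ) (by positivity) (fun a => ?_) (fun a => ?_)
    · rw [Complex.add_re, aa, div_Ih_re ℏ hℏ]
      have := hI a n (by omega) s hs n (by omega) p hp'
      have := del_re n0 j0 n s
      refine (abs_add_le _ _).trans ?_
      rw [abs_of_nonneg this.1]
      linarith
    · rw [Complex.add_im, aa, div_Ih_im ℏ hℏ, del_im, add_zero]
      exact hR a n (by omega) s hs n (by omega) p hp'
  have b4 : Bd K (fun a => PE ℏ N x (γ a)) (fun _ => 0) := by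
    refine Bd.exp _ (1 / ℏ * ∑ n ∈ Icc 1 N, (2 * N * B) * |x n|) (fun a => ?_)
    have e : Complex.I / (ℏ : ℂ) = ((1 / ℏ : ℝ) : ℂ) * Complex.I := by push_cast; ring
    rw [e, mul_assoc, Complex.re_ofReal_mul, Complex.I_mul_re, Complex.im_sum]
    gcongr
    rw [← Finset.sum_neg_distrib]
    refine Finset.sum_le_sum (fun n hn => ?_)
    rw [Complex.im_mul_ofReal]
    refine (neg_le_abs _).trans ?_
    rw [abs_mul]
    gcongr
    have hs : ∀ n ≤ N, |(∑ j ∈ Icc 1 n, γ a n j).im| ≤ N * B := by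
      intro n hn
      rw [Complex.im_sum]
      refine (Finset.abs_sum_le_sum_abs _ _).trans ((Finset.sum_le_sum (fun j hj => him a n hn j hj)).trans ?_)
      simp
      gcongr
    rw [Finset.mem_Icc] at hn
    rw [dco, Complex.sub_im]
    have h1 := hs n hn.2
    have h2 := hs (n - 1) (by omega)
    have := abs_sub (∑ j ∈ Icc 1 n, γ a n j).im (∑ j ∈ Icc 1 (n - 1), γ a (n - 1) j).im
    linarith
  have := ((b1.mul hK b2).mul hK b3).mul hK b4
  refine cast (congrArg (Bd K _) (funext fun a => ?_)) this
  symm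
  simp only [zz, aa, Complex.add_im, div_Ih_im ℏ hℏ, del_im, add_zero, Finset.sum_const_zero, zero_add]
  rw [tE, Finset.mul_sum, ← Finset.sum_add_distrib]
  refine Finset.sum_congr rfl (fun n _ => ?_)
  have e : ∀ u v : ℂ, |-(u - v).re / ℏ| = |u.re - v.re| / ℏ := by
    intro u v
    rw [abs_div, abs_of_pos hℏ, abs_neg, Complex.sub_re]
  simp only [e]
  rw [mul_sub, sub_eq_neg_add]
  simp only [Finset.mul_sum, ← Finset.sum_neg_distrib]
  congr 1
  · refine Finset.sum_congr rfl (fun k _ => Finset.sum_congr rfl (fun m _ => ?_))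
    field_simp
  · refine Finset.sum_congr rfl (fun k _ => Finset.sum_congr rfl (fun m _ => ?_))
    field_simp

lemma poly_exp (q : ℕ) (c : ℝ) (hc : 0 < c) : ∃ C : ℝ, 0 ≤ C ∧ ∀ t : ℝ, 0 ≤ t → (1 + t) ^ q * Real.exp (-(c * t)) ≤ C := by
  refine ⟨q.factorial / c ^ q * Real.exp c, by positivity, fun t ht => ?_⟩
  have := Real.pow_div_factorial_le_exp (c * (1 + t)) (by positivity) q
  have h2 : Real.exp (c * (1 + t)) = Real.exp c * Real.exp (c * t) := by rw [← Real.exp_add]; ring_nf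
  rw [h2, div_le_iff₀ (by positivity), mul_pow] at this
  rw [Real.exp_neg, ← div_eq_mul_inv, div_le_iff₀ (Real.exp_pos _), div_mul_eq_mul_div, div_mul_eq_mul_div,
    le_div_iff₀ (by positivity)]
  linarith

lemma exists_delta {β : Type*} (S : Finset β) (f : β → ℝ) (h : ∀ i ∈ S, 0 < f i) :
    ∃ δ : ℝ, 0 < δ ∧ ∀ i ∈ S, δ ≤ f i := by
  classical
  induction S using Finset.induction_on with
  | empty => exact ⟨1, one_pos, by simp⟩
  | insert i S hi ih =>
    obtain ⟨δ, hδ, h'⟩ := ih (fun j hj => h j (Finset.mem_insert_of_mem hj))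
    refine ⟨min δ (f i), lt_min hδ (h i (Finset.mem_insert_self _ _)), fun j hj => ?_⟩
    rcases Finset.mem_insert.1 hj with rfl | hj
    · exact min_le_right _ _
    · exact (min_le_left _ _).trans (h' j hj)

lemma gam_diffAt (w : ℂ) (hw : 0 < w.re) : DifferentiableAt ℂ Complex.Gamma w := by
  apply Complex.differentiableAt_Gamma
  intro m h
  rw [h] at hw
  simp at hw
  have : (0 : ℝ) ≤ m := Nat.cast_nonneg m
  linarith

lemma Phi_cont {X : Type*} [TopologicalSpace X] (ℏ : ℝ) (N : ℕ)
    (x : ℕ → ℝ) (n0 j0 : ℕ) (γ : X → GZ) (hc : ∀ n j, Continuous (fun a => γ a n j))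
    (hd : ∀ a, ∀ n ∈ Icc 1 (N - 1), ∀ k ∈ Icc 1 n, ∀ m ∈ Icc 1 (n + 1),
      0 < (zz ℏ (γ a) n k m + del n0 j0 (n + 1) m).re) :
    Continuous (fun a => Phi ℏ N x n0 j0 (γ a)) := by
  have hz : ∀ n k m, Continuous (fun a => zz ℏ (γ a) n k m) := fun n k m =>
    ((hc n k).sub (hc (n + 1) m)).div_const _
  have ha : ∀ n k m, Continuous (fun a => aa ℏ (γ a) n k m) := fun n k m =>
    ((hc n k).sub (hc n m)).div_const _
  refine ((Continuous.mul ?_ ?_).mul ?_).mul ?_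
  · refine continuous_finsetProd _ (fun n _ => continuous_finsetProd _ (fun k _ => continuous_finsetProd _ (fun m _ => ?_)))
    exact Complex.continuous_exp.comp ((hz n k m).mul continuous_const)
  · refine continuous_finsetProd _ (fun n hn => continuous_finsetProd _ (fun k hk => continuous_finsetProd _ (fun m hm => ?_)))
    rw [continuous_iff_continuousAt]
    intro a
    exact ContinuousAt.comp (f := fun a => zz ℏ (γ a) n k m + del n0 j0 (n + 1) m)
      (gam_diffAt _ (hd a n hn k hk m hm)).continuousAt ((hz n k m).add continuous_const).continuousAt
  · refine continuous_finsetProd _ (fun n _ => continuous_finsetProd _ (fun k _ => continuous_finsetProd _ (fun m _ => ?_)))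
    exact Complex.differentiable_one_div_Gamma.continuous.comp ((ha n k m).add continuous_const)
  · refine Complex.continuous_exp.comp (continuous_const.mul (continuous_finsetSum _ (fun n _ => Continuous.mul ?_ continuous_const)))
    exact (continuous_finsetSum _ (fun j _ => hc n j)).sub (continuous_finsetSum _ (fun j _ => hc (n - 1) j))

lemma Phi_diffAt (ℏ : ℝ) (N : ℕ)
    (x : ℕ → ℝ) (n0 j0 : ℕ) (γ : ℂ → GZ) (a : ℂ) (hc : ∀ n j, DifferentiableAt ℂ (fun a => γ a n j) a)
    (hd : ∀ n ∈ Icc 1 (N - 1), ∀ k ∈ Icc 1 n, ∀ m ∈ Icc 1 (n + 1),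
      0 < (zz ℏ (γ a) n k m + del n0 j0 (n + 1) m).re) :
    DifferentiableAt ℂ (fun a => Phi ℏ N x n0 j0 (γ a)) a := by
  have hz : ∀ n k m, DifferentiableAt ℂ (fun a => zz ℏ (γ a) n k m) a := fun n k m =>
    ((hc n k).sub (hc (n + 1) m)).div_const _
  have ha : ∀ n k m, DifferentiableAt ℂ (fun a => aa ℏ (γ a) n k m) a := fun n k m =>
    ((hc n k).sub (hc n m)).div_const _
  refine ((DifferentiableAt.mul ?_ ?_).mul ?_).mul ?_
  · refine DifferentiableAt.fun_finsetProd (fun n _ => DifferentiableAt.fun_finsetProd (fun k _ => DifferentiableAt.fun_finsetProd (fun m _ => ?_)))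
    exact ((hz n k m).mul_const _).cexp
  · refine DifferentiableAt.fun_finsetProd (fun n hn => DifferentiableAt.fun_finsetProd (fun k hk => DifferentiableAt.fun_finsetProd (fun m hm => ?_)))
    exact DifferentiableAt.comp (f := fun a => zz ℏ (γ a) n k m + del n0 j0 (n + 1) m) a
      (gam_diffAt _ (hd n hn k hk m hm)) ((hz n k m).add_const _)
  · refine DifferentiableAt.fun_finsetProd (fun n _ => DifferentiableAt.fun_finsetProd (fun k _ => DifferentiableAt.fun_finsetProd (fun m _ => ?_)))
    exact DifferentiableAt.comp (f := fun a => aa ℏ (γ a) n k m + del n0 j0 n k) a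
      (Complex.differentiable_one_div_Gamma _) ((ha n k m).add_const _)
  · refine DifferentiableAt.cexp (DifferentiableAt.const_mul (DifferentiableAt.fun_sum (fun n _ => DifferentiableAt.mul_const ?_ _)) _)
    exact (DifferentiableAt.fun_sum (fun j _ => hc n j)).sub (DifferentiableAt.fun_sum (fun j _ => hc (n - 1) j))

lemma gz_cont (N : ℕ) (g : ℕ → ℂ) (η : ℕ → ℕ → ℝ) (n j : ℕ) :
    Continuous (fun ξ => gzTube N g η ξ n j) := by
  unfold gzTube
  split_ifs with h <;> fun_prop

lemma gz_top (N : ℕ) (g : ℕ → ℂ) (η : ℕ → ℕ → ℝ) (ξ) (j : ℕ) : gzTube N g η ξ N j = g j := by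
  simp [gzTube]

lemma gz_im (N : ℕ) (g : ℕ → ℂ) (η : ℕ → ℕ → ℝ) (hηtop : ∀ k, η N k = (g k).im) (ξ) (n j : ℕ) (hn : n ≤ N)
    (hj : j ∈ Icc 1 n) : (gzTube N g η ξ n j).im = η n j := by
  rw [Finset.mem_Icc] at hj
  unfold gzTube
  split_ifs with h
  · simp
  · have : n = N := by omega
    rw [this, hηtop]

lemma gz_upd (N : ℕ) (g : ℕ → ℂ) (η : ℕ → ℕ → ℝ) (ξ : GZIdx N → ℝ) (i : GZIdx N) (t : ℝ) :
    gzTube N g η (Function.update ξ i (ξ i + t)) = gsh i.1.1 i.1.2 t (gzTube N g η ξ) := by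
  obtain ⟨⟨⟨n0, hn0⟩, ⟨j0, hj0⟩⟩, hi⟩ := i
  simp only at hi
  funext n j
  simp only [gzTube, gsh, del]
  by_cases h : 1 ≤ j ∧ j ≤ n ∧ n < N
  · simp only [h, and_self, dif_pos]
    by_cases h2 : n = n0 ∧ j = j0
    · obtain ⟨rfl, rfl⟩ := h2
      simp
      ring
    · rw [Function.update_of_ne]
      · simp [h2]
      · intro h3
        simp at h3
        exact h2 h3
  · have h2 : ¬ (n = n0 ∧ j = j0) := by rintro ⟨rfl, rfl⟩; exact h ⟨hi.1, hi.2, hn0⟩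
    simp [h, h2]

lemma gsh_gsh (n0 j0 : ℕ) (a b : ℂ) (γ : GZ) : gsh n0 j0 a (gsh n0 j0 b γ) = gsh n0 j0 (a + b) γ := by
  funext n j; simp only [gsh]; ring

lemma gsh_zero (n0 j0 : ℕ) (γ : GZ) : gsh n0 j0 0 γ = γ := by
  funext n j; simp only [gsh]; ring

lemma zz_pos (ℏ : ℝ) (hℏ : 0 < ℏ) (N : ℕ) (γtop : ℕ → ℂ) (η : ℕ → ℕ → ℝ)
    (hηtop : ∀ k, η N k = (γtop k).im)
    (hη : ∀ n : ℕ, 1 ≤ n → n ≤ N - 1 → ∀ j ∈ Icc 1 n, ∀ m ∈ Icc 1 (n + 1), η (n + 1) m < η n j) :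
    ∃ δ : ℝ, 0 < δ ∧ ∀ (ξ : GZIdx N → ℝ) (n0 j0 : ℕ) (ζ : ℂ), 0 ≤ ζ.im → ζ.im ≤ ℏ →
      ∀ n ∈ Icc 1 (N - 1), ∀ k ∈ Icc 1 n, ∀ m ∈ Icc 1 (n + 1),
      δ ≤ (zz ℏ (gsh n0 j0 ζ (gzTube N γtop η ξ)) n k m + del n0 j0 (n + 1) m).re := by
  obtain ⟨δ, hδ, h⟩ := exists_delta ((Icc 1 (N - 1)).sigma (fun n => Icc 1 n ×ˢ Icc 1 (n + 1)))
    (fun i => (η i.1 i.2.1 - η (i.1 + 1) i.2.2) / ℏ) (by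
      rintro ⟨n, k, m⟩ hi
      simp only [Finset.mem_sigma, Finset.mem_product] at hi
      have := hη n (Finset.mem_Icc.1 hi.1).1 (Finset.mem_Icc.1 hi.1).2 k hi.2.1 m hi.2.2
      exact div_pos (by simpa using this) hℏ)
  refine ⟨δ, hδ, fun ξ n0 j0 ζ hζ0 hζ1 n hn k hk m hm => ?_⟩
  have h1 := h ⟨n, k, m⟩ (by simp only [Finset.mem_sigma, Finset.mem_product]; exact ⟨hn, hk, hm⟩)
  rw [Finset.mem_Icc] at hn
  refine h1.trans ?_
  simp only [zz, gsh, Complex.add_re, div_Ih_re ℏ hℏ, Complex.sub_im, Complex.add_im, Complex.mul_im, del_im]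
  rw [gz_im N γtop η hηtop ξ n k (by omega) hk, gz_im N γtop η hηtop ξ (n + 1) m (by omega) hm]
  have d1 := del_re n0 j0 n k
  have d2 := del_re n0 j0 (n + 1) m
  set u := (del n0 j0 n k).re
  set v := (del n0 j0 (n + 1) m).re
  rw [div_add' _ _ _ hℏ.ne']
  gcongr
  nlinarith [mul_nonneg hζ0 d1.1, mul_nonneg (sub_nonneg.2 hζ1) d2.1]

lemma gz_bd (N : ℕ) (γtop : ℕ → ℂ) (η : ℕ → ℕ → ℝ)
    (hηtop : ∀ k, η N k = (γtop k).im) : ∃ B : ℝ, 0 ≤ B ∧ (∀ m ∈ Icc 1 N, |(γtop m).re| ≤ B) ∧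
    ∀ ξ : GZIdx N → ℝ, ∀ n ≤ N, ∀ j ∈ Icc 1 n,
    |(gzTube N γtop η ξ n j).re| ≤ B * (1 + ‖ξ‖) ∧ |(gzTube N γtop η ξ n j).im| ≤ B := by
  set A := ∑ i ∈ range (N + 1) ×ˢ range (N + 1), |η i.1 i.2| with hA
  set A' := ∑ m ∈ Icc 1 N, |(γtop m).re| with hA'
  have hA0 : 0 ≤ A := Finset.sum_nonneg (fun _ _ => abs_nonneg _)
  have hA'0 : 0 ≤ A' := Finset.sum_nonneg (fun _ _ => abs_nonneg _)
  have h1 : ∀ m ∈ Icc 1 N, |(γtop m).re| ≤ A' := fun m hm =>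
    Finset.single_le_sum (f := fun m => |(γtop m).re|) (fun _ _ => abs_nonneg _) hm
  refine ⟨1 + A + A', by positivity, fun m hm => by linarith [h1 m hm], fun ξ n hn j hj => ⟨?_, ?_⟩⟩
  · have hξ := norm_nonneg ξ
    rw [Finset.mem_Icc] at hj
    unfold gzTube
    split_ifs with h
    · have := norm_le_pi_norm ξ ⟨(⟨n, h.2.2⟩, ⟨j, lt_of_le_of_lt h.2.1 h.2.2⟩), h.1, h.2.1⟩
      rw [Real.norm_eq_abs] at this
      simp
      nlinarith [mul_nonneg hA0 hξ, mul_nonneg hA'0 hξ]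
    · have := h1 j (by rw [Finset.mem_Icc]; omega)
      nlinarith [mul_nonneg hA0 hξ, mul_nonneg hA'0 hξ]
  · rw [gz_im N γtop η hηtop ξ n j hn hj]
    rw [Finset.mem_Icc] at hj
    have : |η n j| ≤ A := Finset.single_le_sum (f := fun i : ℕ × ℕ => |η i.1 i.2|) (a := (n, j))
      (fun _ _ => abs_nonneg _) (by simp; omega)
    linarith

lemma Phi_decay (ℏ : ℝ) (hℏ : 0 < ℏ) (N : ℕ) (hN : 2 ≤ N) (γtop : ℕ → ℂ) (η : ℕ → ℕ → ℝ)
    (hηtop : ∀ k, η N k = (γtop k).im)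
    (hη : ∀ n : ℕ, 1 ≤ n → n ≤ N - 1 → ∀ j ∈ Icc 1 n, ∀ m ∈ Icc 1 (n + 1), η (n + 1) m < η n j)
    (x : ℕ → ℝ) (n0 j0 k : ℕ) : ∃ C : ℝ, ∀ (ξ : GZIdx N → ℝ) (s : ℝ), 0 ≤ s → s ≤ ℏ →
      ‖Phi ℏ N x n0 j0 (gsh n0 j0 (s * Complex.I) (gzTube N γtop η ξ))‖ * (1 + ‖ξ‖) ^ k ≤ C := by
  obtain ⟨δ, hδ, hd⟩ := zz_pos ℏ hℏ N γtop η hηtop hη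
  obtain ⟨B, hB, hB1, hB2⟩ := gz_bd N γtop η hηtop
  let K : (GZIdx N → ℝ) × Set.Icc (0 : ℝ) ℏ → ℝ := fun a => ‖a.1‖
  let γ : (GZIdx N → ℝ) × Set.Icc (0 : ℝ) ℏ → GZ := fun a => gsh n0 j0 ((a.2 : ℝ) * Complex.I) (gzTube N γtop η a.1)
  have hγre : ∀ a n j, (γ a n j).re = (gzTube N γtop η a.1 n j).re := by
    intro a n j
    simp [γ, gsh, del_im]
  obtain ⟨C, hC, p, h⟩ := Phi_Bd (K := K) (fun a => norm_nonneg _) ℏ hℏ N x n0 j0 γ (B + ℏ) δ (by positivity) hδ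
    (fun a n hn j hj => by
      rw [hγre]
      have : 0 ≤ K a := norm_nonneg _
      refine (hB2 a.1 n hn j hj).1.trans ?_
      change B * (1 + K a) ≤ _
      gcongr
      linarith)
    (fun a n hn j hj => by
      have := (hB2 a.1 n hn j hj).2
      have d := del_re n0 j0 n j
      have s0 := a.2.2.1
      have s1 := a.2.2.2
      have e : (γ a n j).im = (gzTube N γtop η a.1 n j).im + (a.2 : ℝ) * (del n0 j0 n j).re := by
        simp [γ, gsh]
      rw [e]
      refine (abs_add_le _ _).trans (add_le_add this ?_)
      rw [abs_of_nonneg (mul_nonneg s0 d.1)]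
      nlinarith [d.1, d.2])
    (fun a n hn k hk m hm => hd a.1 n0 j0 _ (by simpa using a.2.2.1) (by simpa using a.2.2.2) n hn k hk m hm)
  have hπ := Real.pi_pos
  obtain ⟨C', hC', hpe⟩ := poly_exp (p + k) (Real.pi / ℏ) (by positivity)
  refine ⟨C * Real.exp (Real.pi / ℏ * B) * C', fun ξ s hs0 hs1 => ?_⟩
  have h1 := h (ξ, ⟨s, hs0, hs1⟩)
  have h2 : tE N (fun n j => (γ (ξ, ⟨s, hs0, hs1⟩) n j).re) ≤ 2 * B - 2 * ‖ξ‖ := by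
    have : Nonempty (GZIdx N) := ⟨⟨(⟨1, by omega⟩, ⟨1, by omega⟩), by simp⟩⟩
    have h3 : ‖ξ‖ ≤ B - tE N (fun n j => (γ (ξ, ⟨s, hs0, hs1⟩) n j).re) / 2 := by
      rw [pi_norm_le_iff_of_nonempty]
      rintro ⟨⟨⟨n, hn⟩, ⟨j, hj⟩⟩, hi⟩
      simp only at hi
      have := tE_le N hN (fun n j => (γ (ξ, ⟨s, hs0, hs1⟩) n j).re) B (fun m hm => by
        simp only [hγre, gz_top]; exact hB1 m hm) n j (by omega) (by rw [Finset.mem_Icc]; exact hi)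
      simp only [hγre] at this ⊢
      have e : (gzTube N γtop η ξ n j).re = ξ ⟨(⟨n, hn⟩, ⟨j, hj⟩), hi⟩ := by
        simp [gzTube, hi, hn]
      rw [e] at this
      rw [Real.norm_eq_abs]
      linarith
    linarith
  change ‖Phi ℏ N x n0 j0 (γ (ξ, ⟨s, hs0, hs1⟩))‖ * _ ≤ _
  have h0 := norm_nonneg ξ
  calc _ ≤ (C * (1 + ‖ξ‖) ^ p * Real.exp (Real.pi / (2 * ℏ) * (2 * B - 2 * ‖ξ‖))) * (1 + ‖ξ‖) ^ k := by
        gcongr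
        refine h1.trans ?_
        change C * (1 + ‖ξ‖) ^ p * _ ≤ _
        gcongr
        exact mul_le_mul_of_nonneg_left h2 (by positivity)
    _ = C * Real.exp (Real.pi / ℏ * B) * ((1 + ‖ξ‖) ^ (p + k) * Real.exp (-(Real.pi / ℏ * ‖ξ‖))) := by
        have : Real.exp (Real.pi / (2 * ℏ) * (2 * B - 2 * ‖ξ‖)) = Real.exp (Real.pi / ℏ * B) * Real.exp (-(Real.pi / ℏ * ‖ξ‖)) := by
          rw [← Real.exp_add]
          congr 1
          field_simp
          ring
        rw [this, pow_add]
        ring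
    _ ≤ _ := by gcongr; exact hpe _ h0

lemma Phi_int_shift (ℏ : ℝ) (hℏ : 0 < ℏ) (N : ℕ) (hN : 2 ≤ N) (γtop : ℕ → ℂ) (η : ℕ → ℕ → ℝ)
    (hηtop : ∀ k, η N k = (γtop k).im)
    (hη : ∀ n : ℕ, 1 ≤ n → n ≤ N - 1 → ∀ j ∈ Icc 1 n, ∀ m ∈ Icc 1 (n + 1), η (n + 1) m < η n j)
    (x : ℕ → ℝ) (n0 j0 : ℕ) (hn0 : n0 ∈ Icc 1 (N - 1)) (hj0 : j0 ∈ Icc 1 n0) :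
    Integrable (fun ξ : GZIdx N → ℝ => Phi ℏ N x n0 j0 (gzTube N γtop η ξ)) ∧
    Integrable (fun ξ : GZIdx N → ℝ => Phi ℏ N x n0 j0 (gsh n0 j0 (Complex.I * ℏ) (gzTube N γtop η ξ))) ∧
    ∫ ξ : GZIdx N → ℝ, Phi ℏ N x n0 j0 (gzTube N γtop η ξ) =
      ∫ ξ : GZIdx N → ℝ, Phi ℏ N x n0 j0 (gsh n0 j0 (Complex.I * ℏ) (gzTube N γtop η ξ)) := by
  obtain ⟨δ, hδ, hd⟩ := zz_pos ℏ hℏ N γtop η hηtop hη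
  rw [Finset.mem_Icc] at hn0 hj0
  obtain ⟨C, hC⟩ := Phi_decay ℏ hℏ N hN γtop η hηtop hη x n0 j0 (Fintype.card (GZIdx N) + 2)
  have hcont : ∀ ζ : ℂ, 0 ≤ ζ.im → ζ.im ≤ ℏ →
      Continuous (fun ξ : GZIdx N → ℝ => Phi ℏ N x n0 j0 (gsh n0 j0 ζ (gzTube N γtop η ξ))) := by
    intro ζ h0 h1
    refine Phi_cont ℏ N x n0 j0 _ (fun n j => ?_) (fun ξ n hn k hk m hm => hδ.trans_le (hd ξ n0 j0 ζ h0 h1 n hn k hk m hm))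
    exact (gz_cont N γtop η n j).add continuous_const
  have := nd_shift (ι := GZIdx N) ⟨(⟨n0, by omega⟩, ⟨j0, by omega⟩), hj0⟩
    (fun ξ ζ => Phi ℏ N x n0 j0 (gsh n0 j0 ζ (gzTube N γtop η ξ))) ℏ hℏ.le
    (fun ξ t ζ => by
      rw [gz_upd, gsh_gsh])
    (fun ξ ζ hζ => (Phi_diffAt ℏ N x n0 j0 _ ζ (fun n j => by
        simp only [gsh]; fun_prop)
      (fun n hn k hk m hm => hδ.trans_le (hd ξ n0 j0 ζ hζ.1 hζ.2 n hn k hk m hm))).differentiableWithinAt)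
    (Fintype.card (GZIdx N) + 2) C (by omega) (by omega) hC
    (hcont 0 (by simp) (by simpa using hℏ.le)) (hcont _ (by simpa using hℏ.le) (by simp))
  simp only [gsh_zero, mul_comm (ℏ : ℂ) Complex.I] at this
  exact this

lemma PP_int {ι : Type*} [Fintype ι] {N : ℕ} {D : Fin N → (ι → ℝ) → ℂ}
    (hD : ∀ i, Continuous (D i)) {B : ℝ}
    (hB : ∀ i ξ, |(D i ξ).re| ≤ B) {c : (ι → ℝ) → ℂ} (hc : Dec c) (x : Fin N → ℝ) :
    Integrable (fun ξ => c ξ * Complex.exp (∑ i, D i ξ * (x i : ℂ))) := by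
  have : Dec (fun ξ => Complex.exp (∑ i, D i ξ * (x i : ℂ)) * c ξ) :=
    hc.mul (by fun_prop) (Real.exp (N * (|B| * ‖x‖))) 0 (fun ξ => by simpa using norm_exp_le hB ξ x)
  simpa only [mul_comm] using this.integrable

lemma fin_sum_Icc (N : ℕ) (f : ℕ → ℂ) : ∑ i : Fin N, f (i + 1) = ∑ n ∈ Icc 1 N, f n := by
  induction N with
  | zero => simp
  | succ N ih => rw [Fin.sum_univ_castSucc, Finset.sum_Icc_succ_top (by omega)]; simp [ih]

lemma fin_pairs : ∀ (N : ℕ) (f : Fin N → ℂ),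
    ∑ m : Fin N, ∑ n ∈ Finset.Ioi m, f m * f n = ((∑ i, f i) ^ 2 - ∑ i, f i ^ 2) / 2 := by
  intro N
  induction N with
  | zero => intro f; simp
  | succ N ih =>
    intro f
    rw [Fin.sum_univ_succ, Fin.sum_univ_succ (f := fun i => f i), Fin.sum_univ_succ (f := fun i => f i ^ 2)]
    have h1 : ∑ n ∈ Finset.Ioi (0 : Fin (N + 1)), f 0 * f n = f 0 * ∑ i : Fin N, f i.succ := by
      rw [Fin.sum_Ioi_zero, Finset.mul_sum]
    have h2 : ∀ i : Fin N, ∑ n ∈ Finset.Ioi i.succ, f i.succ * f n = ∑ n ∈ Finset.Ioi i, f i.succ * f n.succ := by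
      intro i
      rw [Fin.sum_Ioi_succ]
    rw [h1, Finset.sum_congr rfl (fun i _ => h2 i), ih (fun i => f i.succ)]
    ring

lemma icc_pairs (N : ℕ) (g : ℕ → ℂ) :
    ∑ k ∈ Icc 1 N, ∑ j ∈ Ico 1 k, g j * g k = ((∑ i ∈ Icc 1 N, g i) ^ 2 - ∑ i ∈ Icc 1 N, g i ^ 2) / 2 := by
  induction N with
  | zero => simp
  | succ N ih =>
    have : Ico 1 (N + 1) = Icc 1 N := by ext; simp only [Finset.mem_Ico, Finset.mem_Icc]; omega
    rw [Finset.sum_Icc_succ_top (by omega), Finset.sum_Icc_succ_top (by omega), Finset.sum_Icc_succ_top (by omega), ih,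
      this, ← Finset.sum_mul]
    ring

lemma dco_sum (γ : GZ) (N : ℕ) : ∑ n ∈ Icc 1 N, dco γ n = ∑ j ∈ Icc 1 N, γ N j := by
  induction N with
  | zero => simp
  | succ N ih => rw [Finset.sum_Icc_succ_top (by omega), ih, dco]; simp

def An (γ : GZ) (n : ℕ) : ℂ :=
  ((∑ m ∈ Icc 1 (n + 1), γ (n + 1) m ^ 2 - ∑ j ∈ Icc 1 n, γ n j ^ 2 - dco γ (n + 1) ^ 2) / 2)

lemma An_sum (γ : GZ) (N : ℕ) (hN : 1 ≤ N) :
    ∑ n ∈ Icc 1 (N - 1), An γ n = (∑ j ∈ Icc 1 N, γ N j ^ 2 - ∑ n ∈ Icc 1 N, dco γ n ^ 2) / 2 := by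
  obtain ⟨N, rfl⟩ : ∃ M, N = M + 1 := ⟨N - 1, by omega⟩
  rw [Nat.add_sub_cancel]
  clear hN
  induction N with
  | zero => simp [dco]
  | succ N ih =>
    rw [Finset.sum_Icc_succ_top (by omega), ih, An, Finset.sum_Icc_succ_top (f := fun n => dco γ n ^ 2) (b := N + 1) (by omega)]
    ring

lemma key_alg (γ : GZ) (N : ℕ) (hN : 1 ≤ N) (f : Fin N → ℂ) (hf : ∀ i, f i = dco γ (i + 1)) (g : ℕ → ℂ)
    (hg : ∀ j, γ N j = g j) :
    ∑ m : Fin N, ∑ n ∈ Finset.Ioi m, f m * f n =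
      ∑ n ∈ Icc 1 (N - 1), An γ n + ∑ k ∈ Icc 1 N, ∑ j ∈ Ico 1 k, g j * g k := by
  rw [fin_pairs, icc_pairs, An_sum γ N hN]
  simp only [hf, hg]
  rw [fin_sum_Icc N (dco γ), fin_sum_Icc N (fun n => dco γ n ^ 2), dco_sum]
  simp only [hg]
  ring

lemma An_int (ℏ : ℝ) (hℏ : 0 < ℏ) (N : ℕ) (hN : 2 ≤ N) (γtop : ℕ → ℂ) (η : ℕ → ℕ → ℝ)
    (hηtop : ∀ k, η N k = (γtop k).im)
    (hη : ∀ n : ℕ, 1 ≤ n → n ≤ N - 1 → ∀ j ∈ Icc 1 n, ∀ m ∈ Icc 1 (n + 1), η (n + 1) m < η n j)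
    (x : ℕ → ℝ) (n0 : ℕ) (hn0 : n0 ∈ Icc 1 (N - 1)) :
    Integrable (fun ξ : GZIdx N → ℝ => An (gzTube N γtop η ξ) n0 * Phi ℏ N x 0 0 (gzTube N γtop η ξ)) ∧
    ∫ ξ : GZIdx N → ℝ, An (gzTube N γtop η ξ) n0 * Phi ℏ N x 0 0 (gzTube N γtop η ξ) =
      ((Real.exp (x n0 - x (n0 + 1)) : ℝ) : ℂ) * ∫ ξ : GZIdx N → ℝ, Phi ℏ N x 0 0 (gzTube N γtop η ξ) := by
  obtain ⟨δ, hδ, hd⟩ := zz_pos ℏ hℏ N γtop η hηtop hη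
  have hz : ∀ (ξ : GZIdx N → ℝ), ∀ n ∈ Icc 1 (N - 1), ∀ k ∈ Icc 1 n, ∀ m ∈ Icc 1 (n + 1),
      zz ℏ (gzTube N γtop η ξ) n k m ≠ 0 := by
    intro ξ n hn k hk m hm h
    have := hd ξ 0 0 0 (by simp) (by simpa using hℏ.le) n hn k hk m hm
    rw [gsh_zero, h] at this
    simp [del] at this
    linarith
  have hn := Finset.mem_Icc.1 hn0
  have hS := fun ξ : GZIdx N → ℝ => Phi_sum ℏ hℏ N n0 x (gzTube N γtop η ξ) hn0 (fun k hk j hj => by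
    have hk' := Finset.mem_Icc.1 hk
    exact hz ξ (n0 - 1) (by rw [Finset.mem_Icc]; omega) k hk j (by rwa [show n0 - 1 + 1 = n0 by omega]))
  have hT := fun ξ : GZIdx N → ℝ => Phi_sum_shift ℏ hℏ N n0 x (gzTube N γtop η ξ) hn0 (hz ξ n0 hn0)
  have hI := fun j hj => Phi_int_shift ℏ hℏ N hN γtop η hηtop hη x n0 j hn0 hj
  have hm : ((-1 : ℂ) ^ (n0 - 1)) * (-1) ^ (n0 - 1) = 1 := by
    rw [← mul_pow]; simp
  have he : Complex.exp ((x n0 : ℂ) - x (n0 + 1)) * Complex.exp (-((x n0 : ℂ) - x (n0 + 1))) = 1 := by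
    rw [← Complex.exp_add]; simp
  have e : ∀ ξ : GZIdx N → ℝ, An (gzTube N γtop η ξ) n0 * Phi ℏ N x 0 0 (gzTube N γtop η ξ) =
      ((-1) ^ (n0 - 1) * Complex.exp ((x n0 : ℂ) - x (n0 + 1))) *
      ∑ j ∈ Icc 1 n0, Phi ℏ N x n0 j (gsh n0 j (Complex.I * ℏ) (gzTube N γtop η ξ)) := by
    intro ξ
    rw [hT, ← An]
    generalize Complex.exp ((x n0 : ℂ) - x (n0 + 1)) = E1 at *
    generalize Complex.exp (-((x n0 : ℂ) - x (n0 + 1))) = E2 at *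
    generalize ((-1 : ℂ) ^ (n0 - 1)) = s at *
    linear_combination (-(An (gzTube N γtop η ξ) n0 * Phi ℏ N x 0 0 (gzTube N γtop η ξ))) * (E1 * E2 * hm + he)
  have e' : ∀ ξ : GZIdx N → ℝ, Phi ℏ N x 0 0 (gzTube N γtop η ξ) =
      (-1) ^ (n0 - 1) * ∑ j ∈ Icc 1 n0, Phi ℏ N x n0 j (gzTube N γtop η ξ) := by
    intro ξ
    rw [hS, ← mul_assoc, hm, one_mul]
  constructor
  · simp only [e]
    exact (integrable_finsetSum _ (fun j hj => (hI j hj).2.1)).const_mul _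
  · simp only [e]
    rw [integral_const_mul, integral_finsetSum _ (fun j hj => (hI j hj).2.1)]
    simp only [e']
    rw [integral_const_mul, integral_finsetSum _ (fun j hj => (hI j hj).1),
      Finset.sum_congr rfl (fun j hj => (hI j hj).2.2)]
    push_cast
    ring

theorem toda_wave_function_eigen (ℏ : ℝ) (hℏ : 0 < ℏ) (N : ℕ) (hN : 2 ≤ N)
    (γtop : ℕ → ℂ) (η : ℕ → ℕ → ℝ)
    (hηtop : ∀ k, η N k = (γtop k).im)
    (hη : ∀ n : ℕ, 1 ≤ n → n ≤ N - 1 → ∀ j ∈ Icc 1 n, ∀ m ∈ Icc 1 (n + 1),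
      η (n + 1) m < η n j)
    (ψ : (Fin N → ℝ) → ℂ)
    (hψ : ∀ x : Fin N → ℝ,
      ψ x = ∫ ξ : GZIdx N → ℝ, todaIntegrand ℏ N (xval x) (gzTube N γtop η ξ)) :
    ContDiff ℝ 2 ψ ∧
    (∀ x : Fin N → ℝ,
      -(Complex.I * (ℏ : ℂ)) * ∑ n : Fin N, fderiv ℝ ψ x (Pi.single n 1) =
        (∑ j ∈ Icc 1 N, γtop j) * ψ x) ∧
    (∀ x : Fin N → ℝ,
      -((ℏ : ℂ) ^ 2) * ∑ m : Fin N, ∑ n ∈ Finset.Ioi m,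
          fderiv ℝ (fun y => fderiv ℝ ψ y (Pi.single n 1)) x (Pi.single m 1) -
        (∑ j ∈ Icc 1 (N - 1), ((Real.exp (xval x j - xval x (j + 1)) : ℝ) : ℂ)) * ψ x =
        (∑ k ∈ Icc 1 N, ∑ j ∈ Ico 1 k, γtop j * γtop k) * ψ x) := by
  obtain ⟨B, hB, hB1, hB2⟩ := gz_bd N γtop η hηtop
  obtain ⟨δ, hδ, hd⟩ := zz_pos ℏ hℏ N γtop η hηtop hη
  have hℏ' : (ℏ : ℂ) ≠ 0 := by exact_mod_cast hℏ.ne'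
  set c : (GZIdx N → ℝ) → ℂ := fun ξ => Phi ℏ N (fun _ => 0) 0 0 (gzTube N γtop η ξ) with hcdef
  set D : Fin N → (GZIdx N → ℝ) → ℂ := fun i ξ => (Complex.I / (ℏ : ℂ)) * dco (gzTube N γtop η ξ) (i + 1) with hDdef
  have hc : Dec c := by
    constructor
    · refine Phi_cont ℏ N _ 0 0 _ (fun n j => gz_cont N γtop η n j) (fun ξ n hn k hk m hm => ?_)
      have := hd ξ 0 0 0 (by simp) (by simpa using hℏ.le) n hn k hk m hm
      rw [gsh_zero] at this
      exact hδ.trans_le this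
    · intro k
      obtain ⟨C, hC⟩ := Phi_decay ℏ hℏ N hN γtop η hηtop hη (fun _ => 0) 0 0 k
      refine ⟨C, fun ξ => ?_⟩
      have := hC ξ 0 le_rfl hℏ.le
      rw [Complex.ofReal_zero, zero_mul, gsh_zero] at this
      exact this
  have hD : ∀ i, Continuous (D i) := by
    intro i
    exact continuous_const.mul ((continuous_finsetSum _ (fun j _ => gz_cont N γtop η _ j)).sub
      (continuous_finsetSum _ (fun j _ => gz_cont N γtop η _ j)))
  have hs : ∀ ξ, ∀ n ≤ N, |(∑ j ∈ Icc 1 n, gzTube N γtop η ξ n j).im| ≤ N * B := by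
    intro ξ n hn
    rw [Complex.im_sum]
    refine (Finset.abs_sum_le_sum_abs _ _).trans ((Finset.sum_le_sum (fun j hj => (hB2 ξ n hn j hj).2)).trans ?_)
    simp
    gcongr
  have hs' : ∀ ξ, ∀ n ≤ N, ‖∑ j ∈ Icc 1 n, gzTube N γtop η ξ n j‖ ≤ N * (2 * B * (1 + ‖ξ‖)) := by
    intro ξ n hn
    have h0 := norm_nonneg ξ
    have h1 : ∀ j ∈ Icc 1 n, ‖gzTube N γtop η ξ n j‖ ≤ 2 * B * (1 + ‖ξ‖) := by
      intro j hj
      have := Complex.norm_le_abs_re_add_abs_im (gzTube N γtop η ξ n j)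
      have := hB2 ξ n hn j hj
      nlinarith [mul_nonneg hB h0]
    refine (norm_sum_le _ _).trans ((Finset.sum_le_sum h1).trans ?_)
    simp
    gcongr
  have hDB : ∀ i ξ, |(D i ξ).re| ≤ 2 * N * B / ℏ := by
    intro i ξ
    have e : D i ξ = ((1 / ℏ : ℝ) : ℂ) * (Complex.I * dco (gzTube N γtop η ξ) (i + 1)) := by
      simp only [hDdef]; push_cast; ring
    rw [e, Complex.re_ofReal_mul, Complex.I_mul_re, abs_mul, abs_neg, abs_of_pos (by positivity), one_div, inv_mul_eq_div]
    gcongr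
    rw [dco, Complex.sub_im]
    have := i.2
    have h1 := hs ξ (i + 1) (by omega)
    have h2 := hs ξ (i + 1 - 1) (by omega)
    refine (abs_sub _ _).trans ?_
    linarith
  have hDA : ∀ i ξ, ‖D i ξ‖ ≤ (4 * N * B / ℏ) * (1 + ‖ξ‖) ^ 1 := by
    intro i ξ
    simp only [hDdef]
    rw [norm_mul, norm_div, Complex.norm_I, Complex.norm_real, Real.norm_of_nonneg hℏ.le, pow_one, one_div, inv_mul_eq_div,
      div_mul_eq_mul_div]
    gcongr
    have := i.2
    have h1 := hs' ξ (i + 1) (by omega)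
    have h2 := hs' ξ (i + 1 - 1) (by omega)
    refine (norm_sub_le _ _).trans ?_
    linarith
  have hexp : ∀ (x : Fin N → ℝ) ξ, Phi ℏ N (xval x) 0 0 (gzTube N γtop η ξ) =
      c ξ * Complex.exp (∑ i, D i ξ * (x i : ℂ)) := by
    intro x ξ
    have h1 : PE ℏ N (fun _ => 0) (gzTube N γtop η ξ) = 1 := by simp [PE]
    have h2 : PE ℏ N (xval x) (gzTube N γtop η ξ) = Complex.exp (∑ i, D i ξ * (x i : ℂ)) := by
      rw [PE, Finset.mul_sum, ← fin_sum_Icc]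
      congr 1
      refine Finset.sum_congr rfl (fun i _ => ?_)
      have : xval x (i + 1) = x i := by simp [xval]
      rw [this, ← mul_assoc]
    simp only [hcdef, Phi]
    rw [h1, h2, mul_one]
  have hψ' : ψ = PP D c := by
    funext x
    rw [hψ, PP]
    refine integral_congr_ae (Filter.Eventually.of_forall fun ξ => ?_)
    simp only [toda_eq_Phi, hexp]
  have hDc : ∀ i (c : (GZIdx N → ℝ) → ℂ), Dec c → Dec (fun ξ => D i ξ * c ξ) := fun i c hc => hc.mul (hD i) _ 1 (hDA i)
  have hint := fun {c} (hc : Dec c) x => PP_int hD hDB hc x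
  have hf1 : ∀ x n, fderiv ℝ ψ x (Pi.single n 1) = PP D (fun ξ => D n ξ * c ξ) x := by
    intro x n
    rw [hψ', PP_fderiv hD hDA hDB hc]
  refine ⟨?_, ?_, ?_⟩
  · rw [hψ']
    exact PP_contDiff hD hDA hDB 2 hc
  · intro x
    simp only [hf1]
    rw [hψ']
    simp only [PP]
    rw [← integral_finsetSum _ (fun n _ => hint (hDc n c hc) x), ← integral_const_mul, ← integral_const_mul]
    refine integral_congr_ae (Filter.Eventually.of_forall fun ξ => ?_)
    dsimp only
    rw [← Finset.sum_mul, ← Finset.sum_mul, hDdef]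
    dsimp only
    rw [← Finset.mul_sum, fin_sum_Icc N (dco (gzTube N γtop η ξ)), dco_sum]
    simp only [gz_top]
    have hI := Complex.I_mul_I
    field_simp
    linear_combination (-((∑ x ∈ Icc 1 N, γtop x) * c ξ)) * hI
  · intro x
    have hf2 : ∀ m n, fderiv ℝ (fun y => fderiv ℝ ψ y (Pi.single n 1)) x (Pi.single m 1) =
        PP D (fun ξ => D m ξ * (D n ξ * c ξ)) x := by
      intro m n
      have : (fun y => fderiv ℝ ψ y (Pi.single n 1)) = PP D (fun ξ => D n ξ * c ξ) := by
        funext y; exact hf1 y n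
      rw [this, PP_fderiv hD hDA hDB (hDc n c hc)]
    have hA := fun n hn => An_int ℏ hℏ N hN γtop η hηtop hη (xval x) n hn
    have hψx : ψ x = ∫ ξ : GZIdx N → ℝ, Phi ℏ N (xval x) 0 0 (gzTube N γtop η ξ) := by
      rw [hψ]; simp only [toda_eq_Phi]
    have hFint : Integrable (fun ξ : GZIdx N → ℝ => Phi ℏ N (xval x) 0 0 (gzTube N γtop η ξ)) := by
      simp only [hexp]; exact hint hc x
    simp only [hf2]
    have main : -((ℏ : ℂ) ^ 2) * ∑ m : Fin N, ∑ n ∈ Finset.Ioi m, PP D (fun ξ => D m ξ * (D n ξ * c ξ)) x =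
        ∫ ξ : GZIdx N → ℝ, (∑ n ∈ Icc 1 (N - 1), An (gzTube N γtop η ξ) n * Phi ℏ N (xval x) 0 0 (gzTube N γtop η ξ) +
          (∑ k ∈ Icc 1 N, ∑ j ∈ Ico 1 k, γtop j * γtop k) * Phi ℏ N (xval x) 0 0 (gzTube N γtop η ξ)) := by
      simp only [PP]
      have hi2 := fun m n => hint (hDc m _ (hDc n c hc)) x
      rw [Finset.sum_congr rfl (fun m _ => (integral_finsetSum _ (fun n _ => hi2 m n)).symm),
        ← integral_finsetSum _ (fun m _ => integrable_finsetSum _ (fun n _ => hi2 m n)), ← integral_const_mul]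
      refine integral_congr_ae (Filter.Eventually.of_forall fun ξ => ?_)
      dsimp only
      rw [← Finset.sum_mul, ← add_mul, ← key_alg (gzTube N γtop η ξ) N (by omega) (fun i => dco (gzTube N γtop η ξ) (i + 1))
        (fun i => rfl) γtop (gz_top N γtop η ξ), hexp, Finset.mul_sum, Finset.sum_mul]
      refine Finset.sum_congr rfl (fun m _ => ?_)
      rw [Finset.mul_sum, Finset.sum_mul]
      refine Finset.sum_congr rfl (fun n _ => ?_)
      generalize Complex.exp (∑ i, D i ξ * (x i : ℂ)) = E
      simp only [hDdef]
      have hI := Complex.I_sq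
      field_simp
      linear_combination (-(dco (gzTube N γtop η ξ) (↑m + 1) * dco (gzTube N γtop η ξ) (↑n + 1) * c ξ * E)) * hI
    rw [main, integral_add (integrable_finsetSum _ (fun n hn => (hA n hn).1)) (hFint.const_mul _),
      integral_finsetSum _ (fun n hn => (hA n hn).1), integral_const_mul,
      Finset.sum_congr rfl (fun n hn => (hA n hn).2), ← Finset.sum_mul, ← hψx]
    ring
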